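/- arXiv:1711.03056 — 13 statements merged into one kernel-verified Lean document; each statement's English description precedes it below -/
import Mathlib

section
/- If E is a semi-decidable equivalence relation on ℕ in which every equivalence class is infinite (IC), then there exist decidable equivalence relations F and G on ℕ, both IC, such that E = FGF (the composition of F, G, F) and E = F ∨ G (the transitive closure of F ∪ G). -/
/-- `E` is an equivalence relation on ℕ, viewed as a set of pairs:
reflexive, symmetric, transitive. -/
def IsEquivRel (E : Set (ℕ × ℕ)) : Prop :=
  (∀ n, (n, n) ∈ E) ∧ (∀ ⦃i j⦄, (i, j) ∈ E → (j, i) ∈ E) ∧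
    (∀ ⦃i j k⦄, (i, j) ∈ E → (j, k) ∈ E → (i, k) ∈ E)

/-- `H` is a symmetric relation. -/
def IsSymRel (H : Set (ℕ × ℕ)) : Prop := ∀ ⦃i j⦄, (i, j) ∈ H → (j, i) ∈ H

/-- `H` is a transitive relation. -/
def IsTransRel (H : Set (ℕ × ℕ)) : Prop :=
  ∀ ⦃i j k⦄, (i, j) ∈ H → (j, k) ∈ H → (i, k) ∈ H

/-- A relation on ℕ is decidable if membership in it is a computable predicate. -/
def DecidableRelSet (R : Set (ℕ × ℕ)) : Prop :=
  ComputablePred (fun p : ℕ × ℕ => p ∈ R)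

/-- `ν : ℕ₊ → ℕ × ℕ` (modelled as a function on ℕ, restricted to positive
arguments) is an enumeration of `R`: a computable function whose range (over
positive arguments) is `R`. -/
def IsEnumeration (ν : ℕ → ℕ × ℕ) (R : Set (ℕ × ℕ)) : Prop :=
  Computable ν ∧ R = {e | ∃ n, 1 ≤ n ∧ ν n = e}

/-- A relation on ℕ is semi-decidable (computably enumerable) if it is the
range of a computable function `ν : ℕ₊ → ℕ × ℕ`. -/
def SemiDecidableRel (R : Set (ℕ × ℕ)) : Prop := ∃ ν, IsEnumeration ν R

/-- A subset of ℕ is semi-decidable (computably enumerable) if it is the range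
of a computable function on positive arguments. -/
def SemiDecidableSet (A : Set ℕ) : Prop :=
  ∃ f : ℕ → ℕ, Computable f ∧ A = {a | ∃ n, 1 ≤ n ∧ f n = a}

/-- `E` is IC: every equivalence class `[i]_E = {j | (i,j) ∈ E}` is infinite. -/
def IC (E : Set (ℕ × ℕ)) : Prop := ∀ i, {j | (i, j) ∈ E}.Infinite

/-- `E` is FC: every equivalence class `[i]_E = {j | (i,j) ∈ E}` is finite. -/
def FC (E : Set (ℕ × ℕ)) : Prop := ∀ i, {j | (i, j) ∈ E}.Finite

/-- Composition of relations: `RS = {(i,k) | ∃ j, (i,j) ∈ R ∧ (j,k) ∈ S}`. -/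
def relComp (R S : Set (ℕ × ℕ)) : Set (ℕ × ℕ) :=
  {p | ∃ j, (p.1, j) ∈ R ∧ (j, p.2) ∈ S}

/-- Converse relation: `R⁻¹ = {(j,i) | (i,j) ∈ R}`. -/
def relInv (R : Set (ℕ × ℕ)) : Set (ℕ × ℕ) := {p | (p.2, p.1) ∈ R}

/-- Transitive closure of a relation, `tc R = ⋃_{n ≥ 1} Rⁿ`. -/
def tc (R : Set (ℕ × ℕ)) : Set (ℕ × ℕ) :=
  {p | Relation.TransGen (fun i j => (i, j) ∈ R) p.1 p.2}

/-- `ξ` is a coding of the enumeration `ν` (with `π = ν ∘ ξ`):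
a computable `ξ : ℕ₊ → ℕ₊` such that `1 < ξ(1)`, `π₁(π(1)) = π₁(ν(1))`,
`max {1, π₁(ν(1))} < π₂(π(1))`, and for every `n ≥ 1`: `ξ(n) < ξ(n+1)`,
`π₁(ν(ξ(n+1))) = π₁(ν(n+1))`, and
`max {π₁(π(n+1)), π₂(π(n))} < π₂(π(n+1))`. -/
def IsCoding (ν : ℕ → ℕ × ℕ) (ξ : ℕ → ℕ) : Prop :=
  Computable ξ ∧
  1 < ξ 1 ∧ (ν (ξ 1)).1 = (ν 1).1 ∧ max 1 (ν 1).1 < (ν (ξ 1)).2 ∧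
  ∀ n, 1 ≤ n →
    ξ n < ξ (n + 1) ∧ (ν (ξ (n + 1))).1 = (ν (n + 1)).1 ∧
    max (ν (ξ (n + 1))).1 (ν (ξ n)).2 < (ν (ξ (n + 1))).2

/-- `R_ξ = {π(n) | n ∈ ℕ₊}` where `π = ν ∘ ξ`. -/
def Rcod (ν : ℕ → ℕ × ℕ) (ξ : ℕ → ℕ) : Set (ℕ × ℕ) :=
  {e | ∃ n, 1 ≤ n ∧ ν (ξ n) = e}

/-- `S_ξ = {(π₂(π(m)), π₂(π(n))) | m, n ∈ ℕ₊ and ν(n) = (ν(m))⁻¹}`. -/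
def Scod (ν : ℕ → ℕ × ℕ) (ξ : ℕ → ℕ) : Set (ℕ × ℕ) :=
  {e | ∃ m, 1 ≤ m ∧ ∃ n, 1 ≤ n ∧ ν n = ((ν m).2, (ν m).1) ∧
    e = ((ν (ξ m)).2, (ν (ξ n)).2)}

/-- `T_ξ = {(π₂(π(m)), π₂(π(n))) | m, n ∈ ℕ₊ and ν(n) = ν(m)}`. -/
def Tcod (ν : ℕ → ℕ × ℕ) (ξ : ℕ → ℕ) : Set (ℕ × ℕ) :=
  {e | ∃ m, 1 ≤ m ∧ ∃ n, 1 ≤ n ∧ ν n = ν m ∧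
    e = ((ν (ξ m)).2, (ν (ξ n)).2)}

/-- The identity relation `I = {(n,n) | n ∈ ℕ}`. -/
def diagRel : Set (ℕ × ℕ) := {p | p.1 = p.2}

/-- The field of a relation: `F(H) = {i | ∃ j, (i,j) ∈ H ∨ (j,i) ∈ H}`. -/
def fld (H : Set (ℕ × ℕ)) : Set ℕ := {i | ∃ j, (i, j) ∈ H ∨ (j, i) ∈ H}

theorem aux_f (E : Set (ℕ × ℕ)) (ν : ℕ → ℕ × ℕ) (hν : IsEnumeration ν E) (hIC : IC E) :
    ∃ f : ℕ × ℕ → ℕ, Computable f ∧ ∀ a c, (a, f (a, c)) ∈ E ∧ c < f (a, c) := by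
  obtain ⟨hc, hR⟩ := hν
  let t : ℕ × ℕ → ℕ → Bool := fun q k => decide ((ν (k+1)).1 = q.1) && decide (q.2 < (ν (k+1)).2)
  have hνk : Computable (fun z : (ℕ × ℕ) × ℕ => ν (z.2 + 1)) :=
    hc.comp (Computable.succ.comp Computable.snd)
  have ht : Computable₂ t := by
    have h1 : Computable (fun z : (ℕ × ℕ) × ℕ => decide ((ν (z.2+1)).1 = z.1.1)) :=
      (Primrec.eq (α := ℕ)).decide.to_comp.comp (Computable.fst.comp hνk)
        (Computable.fst.comp Computable.fst)
    have h2 : Computable (fun z : (ℕ × ℕ) × ℕ => decide (z.1.2 < (ν (z.2+1)).2)) :=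
      Primrec.nat_lt.decide.to_comp.comp (Computable.snd.comp Computable.fst)
        (Computable.snd.comp hνk)
    exact Primrec.and.to_comp.comp h1 h2
  have hp : Partrec (fun q : ℕ × ℕ => Nat.rfind (fun k => Part.some (t q k))) :=
    Partrec.rfind (p := fun q k => Part.some (t q k)) ht.partrec₂
  have hd : ∀ q : ℕ × ℕ, (Nat.rfind (fun k => Part.some (t q k))).Dom := by
    intro q
    refine Nat.rfind_dom.2 ?_
    obtain ⟨j, hj, hlt⟩ := (hIC q.1).exists_gt q.2
    simp only [Set.mem_ofPred_eq] at hj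
    rw [hR] at hj
    obtain ⟨n, hn, hnu⟩ := hj
    refine ⟨n - 1, ?_, fun _ => trivial⟩
    have : n - 1 + 1 = n := by omega
    simp [t, this, hnu, hlt]
  let g : ℕ × ℕ → ℕ := fun q => (Nat.rfind (fun k => Part.some (t q k))).get (hd q)
  have hg : Computable g := hp.of_eq (fun q => (Part.some_get (hd q)).symm)
  refine ⟨fun q => (ν (g q + 1)).2,
    Computable.snd.comp (hc.comp (Computable.succ.comp hg)), fun a c => ?_⟩
  have hs := Nat.rfind_spec (Part.get_mem (hd (a, c)))
  have hs' : t (a, c) (g (a, c)) = true := by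
    have := Part.mem_some_iff.1 hs
    exact this.symm
  simp only [t, Bool.and_eq_true, decide_eq_true_eq] at hs'
  refine ⟨?_, hs'.2⟩
  rw [hR]
  exact ⟨g (a, c) + 1, by omega, Prod.ext hs'.1 rfl⟩

theorem aux_lam (E : Set (ℕ × ℕ)) (hE : IsEquivRel E) (hsd : SemiDecidableRel E) (hIC : IC E) :
    ∃ l : ℕ → ℕ × ℕ, Computable l ∧ (∀ x, l x ∈ E) ∧ (∀ x, (x, (l x).1) ∈ E) ∧
      (∀ x, (l x).1 ≤ x) ∧ ∀ e ∈ E, {x | l x = e}.Infinite := by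
  obtain ⟨ν, hν⟩ := hsd
  obtain ⟨f, hf, hfs⟩ := aux_f E ν hν hIC
  obtain ⟨hc, hR⟩ := hν
  let μ : ℕ → ℕ × ℕ := fun n => ν (n.unpair.1 + 1)
  have hμ : Computable μ :=
    hc.comp (Computable.succ.comp (Computable.fst.comp Primrec.unpair.to_comp))
  have hμE : ∀ n, μ n ∈ E := fun n => by
    rw [hR]; exact ⟨_, by omega, rfl⟩
  let p : ℕ → ℕ := fun n => Nat.rec (motive := fun _ => ℕ) (f ((μ 0).1, (μ 0).1))
    (fun k r => f ((μ (k+1)).1, max (μ (k+1)).1 r)) n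
  have hp : Computable p := by
    have hm : Computable (fun z : ℕ × (ℕ × ℕ) => (μ (z.2.1 + 1)).1) :=
      Computable.fst.comp (hμ.comp (Computable.succ.comp (Computable.fst.comp Computable.snd)))
    exact Computable.nat_rec (f := fun n : ℕ => n) (g := fun _ => f ((μ 0).1, (μ 0).1))
      (h := fun _ (z : ℕ × ℕ) => f ((μ (z.1+1)).1, max (μ (z.1+1)).1 z.2))
      Computable.id (Computable.const _)
      (hf.comp (hm.pair (Primrec.nat_max.to_comp.comp hm (Computable.snd.comp Computable.snd))))
  have hpE : ∀ n, ((μ n).1, p n) ∈ E := by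
    intro n; cases n with
    | zero => exact (hfs _ _).1
    | succ k => exact (hfs _ _).1
  have hpa : ∀ n, (μ n).1 < p n := by
    intro n; cases n with
    | zero => exact (hfs _ _).2
    | succ k => exact lt_of_le_of_lt (le_max_left _ _) (hfs (μ (k+1)).1 (max (μ (k+1)).1 (p k))).2
  have hpm : StrictMono p := strictMono_nat_of_lt_succ fun k =>
    lt_of_le_of_lt (le_max_right _ _) (hfs (μ (k+1)).1 (max (μ (k+1)).1 (p k))).2
  clear_value p
  let g : ℕ → ℕ → ℕ × ℕ := fun (x n : ℕ) =>
    Nat.rec (motive := fun _ => ℕ × ℕ) (x, x) (fun (k : ℕ) (r : ℕ × ℕ) => cond (@decide (p k = x) (instDecidableEqNat (p k) x)) (μ k) r) n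
  have hgs : ∀ x k : ℕ, g x (k+1) = cond (decide (p k = x)) (μ k) (g x k) := fun _ _ => rfl
  have hl : Computable (fun x => g x (x+1)) := by
    refine Computable.nat_rec (f := fun x : ℕ => x + 1) (g := fun x => (x, x))
      (h := fun x (z : ℕ × (ℕ × ℕ)) => cond (decide (p z.1 = x)) (μ z.1) z.2)
      Computable.succ (Computable.id.pair Computable.id) ?_
    have hk : Computable (fun z : ℕ × (ℕ × (ℕ × ℕ)) => z.2.1) :=
      Computable.fst.comp Computable.snd
    exact Computable.cond
      ((Primrec.eq (α := ℕ)).decide.to_comp.comp (hp.comp hk) Computable.fst)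
      (hμ.comp hk) (Computable.snd.comp Computable.snd)
  have hg1 : ∀ x n, g x n = (x, x) ∨ ∃ k, p k = x ∧ g x n = μ k := by
    intro x n
    induction n with
    | zero => exact Or.inl rfl
    | succ k ih =>
      rw [hgs]
      by_cases h : p k = x
      · right; exact ⟨k, h, by simp [h]⟩
      · simpa [h] using ih
  have hg2 : ∀ k n, k < n → g (p k) n = μ k := by
    intro k n hkn
    induction n with
    | zero => omega
    | succ m ih =>
      rw [hgs]
      by_cases h : m = k
      · subst h; simp
      · have : p m ≠ p k := fun h' => h (hpm.injective h')
        simp only [this, decide_false, cond_false]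
        exact ih (by omega)
  refine ⟨fun x => g x (x+1), hl, fun x => ?_, fun x => ?_, fun x => ?_, fun e he => ?_⟩
  · rcases hg1 x (x+1) with h | ⟨k, hk, h⟩
    · simp only [h]; exact hE.1 x
    · simp only [h]; exact hμE k
  · rcases hg1 x (x+1) with h | ⟨k, hk, h⟩
    · simp only [h]; exact hE.1 x
    · simp only [h]; rw [← hk]; exact hE.2.1 (hpE k)
  · rcases hg1 x (x+1) with h | ⟨k, hk, h⟩
    · simp only [h]; exact le_rfl
    · simp only [h]; rw [← hk]; exact (hpa k).le
  · rw [hR] at he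
    obtain ⟨n, hn, rfl⟩ := he
    have hinj : Function.Injective (fun m => p (Nat.pair (n-1) m)) := fun a b h => by
      have := hpm.injective h
      simpa using this
    refine (Set.infinite_range_of_injective hinj).mono ?_
    rintro _ ⟨m, rfl⟩
    simp only [Set.mem_ofPred_eq]
    rw [hg2 _ _ (Nat.lt_succ_of_le (hpm.le_apply))]
    have : n - 1 + 1 = n := by omega
    simp [μ, this]

theorem aux_equiv {α : Type} (r : ℕ → α) : IsEquivRel {q : ℕ × ℕ | r q.1 = r q.2} :=
  ⟨fun _ => rfl, fun _ _ h => Eq.symm h, fun _ _ _ h h' => Eq.trans h h'⟩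

theorem aux_dec {α : Type} [Primcodable α] [DecidableEq α] (r : ℕ → α) (hr : Computable r) :
    DecidableRelSet {q : ℕ × ℕ | r q.1 = r q.2} := by
  refine ⟨fun q => inferInstanceAs (Decidable (r q.1 = r q.2)), ?_⟩
  exact (Primrec.eq (α := α)).decide.to_comp.comp (hr.comp Computable.fst)
    (hr.comp Computable.snd)

theorem stmt_0 (E : Set (ℕ × ℕ)) (hE : IsEquivRel E) (hsd : SemiDecidableRel E)
    (hIC : IC E) :
    ∃ F G : Set (ℕ × ℕ),
      IsEquivRel F ∧ IsEquivRel G ∧ DecidableRelSet F ∧ DecidableRelSet G ∧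
      IC F ∧ IC G ∧
      E = relComp (relComp F G) F ∧ E = tc (F ∪ G) := by
  obtain ⟨l, hl, hlE, hxE, hle, hinf⟩ := aux_lam E hE hsd hIC
  obtain ⟨rf, sy, tr⟩ := hE
  let it : ℕ → ℕ → ℕ := fun x n => Nat.rec (motive := fun _ => ℕ) x (fun _ r => (l r).1) n
  have its : ∀ x n, it x (n+1) = (l (it x n)).1 := fun _ _ => rfl
  have its' : ∀ x n, it x (n+1) = it (l x).1 n := by
    intro x n
    induction n with
    | zero => rfl
    | succ n ih => exact congrArg (fun z => (l z).1) ih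
  have stab : ∀ x n, x ≤ n → it x (n+1) = it x n := by
    intro x n
    induction n generalizing x with
    | zero =>
      intro h
      have := hle x
      rw [its]
      change (l x).1 = x
      omega
    | succ n ih =>
      intro h
      by_cases h' : (l x).1 = x
      · have : ∀ m : ℕ, it x m = x := by
          intro m
          induction m with
          | zero => rfl
          | succ m ihm => rw [its, ihm, h']
        exact (this (n+1+1)).trans (this (n+1)).symm
      · rw [its' x (n+1), its' x n]
        refine ih _ ?_
        have := hle x
        omega
  have stab2 : ∀ x n, x ≤ n → it x n = it x x := by
    intro x n h
    induction n, h using Nat.le_induction with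
    | base => rfl
    | succ n h ih => rw [stab x n h, ih]
  let root : ℕ → ℕ := fun x => it x x
  have hroot : ∀ x, root x = root (l x).1 := by
    intro x
    change it x x = it (l x).1 (l x).1
    rw [← stab x x le_rfl, its', stab2 _ _ (hle x)]
  have hrootE : ∀ x, (x, root x) ∈ E := by
    intro x
    have : ∀ n, (x, it x n) ∈ E := by
      intro n
      induction n with
      | zero => exact rf x
      | succ n ih => exact tr ih (hxE _)
    exact this x
  have hrootc : Computable root := by
    refine Computable.nat_rec (f := fun x : ℕ => x) (g := fun x => x)
      (h := fun _ (z : ℕ × ℕ) => (l z.2).1) Computable.id Computable.id ?_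
    exact Computable.fst.comp (hl.comp (Computable.snd.comp Computable.snd))
  let lab : ℕ → ℕ × ℕ := fun x => (min (l x).1 (l x).2, max (l x).1 (l x).2)
  have hlab : Computable lab :=
    (Primrec.nat_min.to_comp.comp (Computable.fst.comp hl) (Computable.snd.comp hl)).pair
      (Primrec.nat_max.to_comp.comp (Computable.fst.comp hl) (Computable.snd.comp hl))
  have hlabE : ∀ x, (x, (lab x).1) ∈ E := by
    intro x
    rcases min_choice (l x).1 (l x).2 with h | h
    · simp only [lab, h]; exact hxE x
    · simp only [lab, h]; exact tr (hxE x) (hlE x)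
  let F : Set (ℕ × ℕ) := {q | root q.1 = root q.2}
  let G : Set (ℕ × ℕ) := {q | lab q.1 = lab q.2}
  have hFE : ∀ i j, (i, j) ∈ F → (i, j) ∈ E := by
    intro i j h
    have h : root i = root j := h
    have := hrootE i
    rw [h] at this
    exact tr this (sy (hrootE j))
  have hGE : ∀ i j, (i, j) ∈ G → (i, j) ∈ E := by
    intro i j h
    have h : lab i = lab j := h
    have := hlabE i
    rw [h] at this
    exact tr this (sy (hlabE j))
  have key : ∀ i j, (i, j) ∈ E → ∃ x y, (i, x) ∈ F ∧ (x, y) ∈ G ∧ (y, j) ∈ F := by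
    intro i j h
    obtain ⟨x, hx⟩ := (hinf _ h).nonempty
    obtain ⟨y, hy⟩ := (hinf _ (sy h)).nonempty
    simp only [Set.mem_ofPred_eq] at hx hy
    refine ⟨x, y, ?_, ?_, ?_⟩
    · change root i = root x
      rw [hroot x, hx]
    · change lab x = lab y
      simp only [lab, hx, hy, min_comm, max_comm]
    · change root y = root j
      rw [hroot y, hy]
  refine ⟨F, G, aux_equiv root, aux_equiv lab, aux_dec root hrootc, aux_dec lab hlab, ?_, ?_, ?_, ?_⟩
  · intro i
    refine (hinf _ (rf i)).mono ?_
    intro x hx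
    simp only [Set.mem_ofPred_eq] at hx
    change root i = root x
    rw [hroot x, hx]
  · intro i
    refine (hinf _ (hlE i)).mono ?_
    intro x hx
    simp only [Set.mem_ofPred_eq] at hx
    change lab i = lab x
    simp only [lab, hx]
  · ext ⟨i, j⟩
    constructor
    · intro h
      obtain ⟨x, y, h1, h2, h3⟩ := key i j h
      exact ⟨y, ⟨x, h1, h2⟩, h3⟩
    · rintro ⟨y, ⟨x, h1, h2⟩, h3⟩
      exact tr (tr (hFE _ _ h1) (hGE _ _ h2)) (hFE _ _ h3)
  · ext ⟨i, j⟩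
    constructor
    · intro h
      obtain ⟨x, y, h1, h2, h3⟩ := key i j h
      have a1 : (i, x) ∈ F ∪ G := Or.inl h1
      have a2 : (x, y) ∈ F ∪ G := Or.inr h2
      have a3 : (y, j) ∈ F ∪ G := Or.inl h3
      change Relation.TransGen (fun i j => (i, j) ∈ F ∪ G) i j
      exact Relation.TransGen.tail (r := fun i j => (i, j) ∈ F ∪ G)
        (Relation.TransGen.tail (r := fun i j => (i, j) ∈ F ∪ G)
          (Relation.TransGen.single (r := fun i j => (i, j) ∈ F ∪ G) a1) a2) a3
    · intro h0
      have hU : ∀ a b, (a, b) ∈ F ∪ G → (a, b) ∈ E :=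
        fun a b h => Or.elim h (hFE a b) (hGE a b)
      have h : Relation.TransGen (fun i j => (i, j) ∈ F ∪ G) i j := h0
      clear h0
      induction h with
      | single h => exact hU _ _ h
      | tail _ h ih => exact tr ih (hU _ _ h)
end

section
/- If E is a semi-decidable equivalence relation on ℕ in which every equivalence class is infinite (IC), then there exist decidable equivalence relations F and G on ℕ, with F IC, such that E = FGF (the composition of F, G, F) and E = F ∨ G (the transitive closure of F ∪ G). -/
section aux

theorem aux_decEq {α β : Type*} [Primcodable α] [Primcodable β] [DecidableEq β] {f g : α → β}
    (hf : Computable f) (hg : Computable g) : Computable (fun x => decide (f x = g x)) := by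
  have h : Computable₂ (fun a b : β => decide (a = b)) := by
    have := (Primrec.eq (α := β))
    have h2 := PrimrecRel.decide this
    exact (Primrec₂.to_comp h2).of_eq (fun n => by simp)
  exact h.comp hf hg

theorem aux_decLt {α : Type*} [Primcodable α] {f g : α → ℕ}
    (hf : Computable f) (hg : Computable g) : Computable (fun x => decide (f x < g x)) := by
  have h : Computable₂ (fun a b : ℕ => decide (a < b)) := by
    have h2 := PrimrecRel.decide Primrec.nat_lt
    exact (Primrec₂.to_comp h2).of_eq (fun n => by simp)
  exact h.comp hf hg

theorem aux_and {α : Type*} [Primcodable α] {f g : α → Bool}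
    (hf : Computable f) (hg : Computable g) : Computable (fun x => f x && g x) :=
  (Primrec₂.to_comp Primrec.and).comp hf hg

/-- kernel of a computable function is decidable -/
theorem aux_ker {β : Type*} [Primcodable β] [DecidableEq β] {f : ℕ → β} (hf : Computable f) :
    DecidableRelSet {p | f p.1 = f p.2} := by
  have h := aux_decEq (hf.comp (Computable.fst (α := ℕ) (β := ℕ))) (hf.comp (Computable.snd (α := ℕ) (β := ℕ)))
  exact h.computablePred

theorem aux_ker_equiv {β : Type*} (f : ℕ → β) : IsEquivRel {p : ℕ × ℕ | f p.1 = f p.2} :=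
  ⟨fun _ => rfl, fun _ _ h => Eq.symm h, fun _ _ _ h h' => Eq.trans h h'⟩

/-- strictly increasing selection -/
theorem aux_y (a b : ℕ → ℕ) (ha : Computable a) (hb : Computable b)
    (H : ∀ n v, ∃ k, a k = a n ∧ v < b k) :
    ∃ y : ℕ → ℕ, Computable y ∧ StrictMono y ∧ ∀ n, a n < y n ∧ ∃ k, a k = a n ∧ b k = y n := by
  classical
  let P : ℕ × ℕ → ℕ → Prop := fun p k => a k = a p.1 ∧ max (a p.1) p.2 < b k
  have hP : ∀ p, ∃ k, P p k := fun p => H _ _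
  have hPc : Computable (fun q : (ℕ × ℕ) × ℕ => decide (P q.1 q.2)) := by
    have h1 := aux_decEq (ha.comp (Computable.snd (α := ℕ × ℕ) (β := ℕ)))
      (ha.comp (Computable.fst.comp (Computable.fst (α := ℕ × ℕ) (β := ℕ))))
    have h2 := aux_decLt ((Primrec₂.to_comp Primrec.nat_max).comp
      (ha.comp (Computable.fst.comp (Computable.fst (α := ℕ × ℕ) (β := ℕ))))
      (Computable.snd.comp (Computable.fst (α := ℕ × ℕ) (β := ℕ))))
      (hb.comp (Computable.snd (α := ℕ × ℕ) (β := ℕ)))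
    exact (aux_and h1 h2).of_eq (fun q => by simp [P])
  have hfind : Computable (fun p : ℕ × ℕ => Nat.find (hP p)) :=
    Computable.find hPc.computablePred hP
  let s : ℕ × ℕ → ℕ := fun p => b (Nat.find (hP p))
  have hs : Computable s := hb.comp hfind
  have spec : ∀ p, max (a p.1) p.2 < s p ∧ ∃ k, a k = a p.1 ∧ b k = s p := fun p =>
    ⟨(Nat.find_spec (hP p)).2, _, (Nat.find_spec (hP p)).1, rfl⟩
  let y : ℕ → ℕ := fun n => Nat.rec (s (0, 0)) (fun n v => s (n + 1, v)) n
  have ysucc : ∀ n, y (n + 1) = s (n + 1, y n) := fun n => rfl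
  refine ⟨y, ?_, ?_, ?_⟩
  · refine Computable.nat_rec (f := fun n : ℕ => n) (g := fun _ => s (0, 0))
      (h := fun _ q => s (q.1 + 1, q.2)) Computable.id (Computable.const _) ?_
    exact hs.comp (Computable.pair (Computable.succ.comp (Computable.fst.comp Computable.snd))
      (Computable.snd.comp Computable.snd))
  · refine strictMono_nat_of_lt_succ fun n => ?_
    rw [ysucc]
    exact lt_of_le_of_lt (le_max_right _ _) (spec (n + 1, y n)).1
  · intro n
    cases n with
    | zero => exact ⟨lt_of_le_of_lt (le_max_left _ _) (spec (0, 0)).1, (spec (0, 0)).2⟩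
    | succ n =>
      rw [ysucc]
      exact ⟨lt_of_le_of_lt (le_max_left _ _) (spec (n + 1, y n)).1, (spec (n + 1, y n)).2⟩

theorem aux_idx (y : ℕ → ℕ) (hy : Computable y) (hm : StrictMono y) :
    ∃ d : ℕ → ℕ, Computable d ∧ ∀ n, d (y n) = n := by
  classical
  have hP : ∀ x, ∃ k, x < y k + 1 := fun x => ⟨x, Nat.lt_succ_of_le hm.le_apply⟩
  have hc : Computable (fun q : ℕ × ℕ => decide (q.1 < y q.2 + 1)) :=
    aux_decLt Computable.fst (Computable.succ.comp (hy.comp Computable.snd))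
  refine ⟨fun x => Nat.find (hP x), Computable.find hc.computablePred hP, fun n => ?_⟩
  rw [Nat.find_eq_iff]
  refine ⟨Nat.lt_succ_self _, fun k hk => ?_⟩
  have := hm hk
  omega

theorem aux_root (p : ℕ → ℕ) (hp : ∀ x, p x ≤ x) (x : ℕ) :
    ∀ k, x ≤ k → p^[k] x = p^[x] x := by
  have key : ∀ x k, x ≤ k → p (p^[k] x) = p^[k] x := by
    intro x
    induction x using Nat.strong_induction_on with
    | _ x ih =>
      intro k hk
      by_cases h : p x = x
      · rw [Function.iterate_fixed h, h]
      · have h1 := hp x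
        obtain ⟨k, rfl⟩ : ∃ j, k = j + 1 := ⟨k - 1, by omega⟩
        rw [Function.iterate_succ_apply]
        exact ih (p x) (by omega) k (by omega)
  intro k hk
  induction k, hk using Nat.le_induction with
  | base => rfl
  | succ k hk ih => rw [Function.iterate_succ_apply', key x k hk, ih]

end aux

theorem stmt_1 (E : Set (ℕ × ℕ)) (hE : IsEquivRel E) (hsd : SemiDecidableRel E)
    (hIC : IC E) :
    ∃ F G : Set (ℕ × ℕ),
      IsEquivRel F ∧ IsEquivRel G ∧ DecidableRelSet F ∧ DecidableRelSet G ∧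
      IC F ∧
      E = relComp (relComp F G) F ∧ E = tc (F ∪ G) := by
  obtain ⟨ν, hν, hR⟩ := hsd
  obtain ⟨hr, hsym, htr⟩ := hE
  let a : ℕ → ℕ := fun n => (ν (n + 1)).1
  let b : ℕ → ℕ := fun n => (ν (n + 1)).2
  have ha : Computable a := Computable.fst.comp (hν.comp Computable.succ)
  have hb : Computable b := Computable.snd.comp (hν.comp Computable.succ)
  have hab : ∀ n, (a n, b n) ∈ E := fun n => by
    rw [hR]; exact ⟨n + 1, by omega, rfl⟩
  have hsurj : ∀ i j, (i, j) ∈ E → ∃ n, a n = i ∧ b n = j := by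
    intro i j h
    rw [hR] at h
    obtain ⟨n, hn, h⟩ := h
    obtain ⟨m, rfl⟩ : ∃ m, n = m + 1 := ⟨n - 1, by omega⟩
    exact ⟨m, by simp [a, h], by simp [b, h]⟩
  have hbig : ∀ i v, ∃ k, a k = i ∧ v < b k := by
    intro i v
    obtain ⟨j, hj, hv⟩ := (hIC i).exists_gt v
    obtain ⟨k, h1, h2⟩ := hsurj i j hj
    exact ⟨k, h1, h2 ▸ hv⟩
  obtain ⟨y, hy, hm, hspec⟩ := aux_y a b ha hb (fun n v => hbig (a n) v)
  obtain ⟨d, hd, hdy⟩ := aux_idx y hy hm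
  have hay : ∀ n, (a n, y n) ∈ E := by
    intro n
    obtain ⟨-, k, h1, h2⟩ := hspec n
    rw [← h1, ← h2]; exact hab k
  let inY : ℕ → Bool := fun x => decide (y (d x) = x)
  have hinY : Computable inY := aux_decEq (hy.comp hd) Computable.id
  let p : ℕ → ℕ := fun x => bif inY x then a (d x) else x
  have hpc : Computable p := Computable.cond hinY (ha.comp hd) Computable.id
  have hpy : ∀ n, p (y n) = a n := by intro n; simp [p, inY, hdy]
  have hcase : ∀ x, (∃ n, x = y n) ∨ inY x = false := by
    intro x
    by_cases h : y (d x) = x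
    · exact Or.inl ⟨_, h.symm⟩
    · exact Or.inr (by simp [inY, h])
  have hple : ∀ x, p x ≤ x := by
    intro x
    rcases hcase x with ⟨n, rfl⟩ | h
    · rw [hpy]; exact (hspec n).1.le
    · simp [p, h]
  have hpE : ∀ x, (x, p x) ∈ E := by
    intro x
    rcases hcase x with ⟨n, rfl⟩ | h
    · rw [hpy]; exact hsym (hay n)
    · simpa [p, h] using hr x
  let r : ℕ → ℕ := fun x => p^[x] x
  have hrc : Computable r := by
    have : Computable (fun x : ℕ => (Nat.rec x (fun _ v => p v) x : ℕ)) :=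
      Computable.nat_rec (f := fun n : ℕ => n) (g := fun n => n)
        (h := fun _ q => p q.2) Computable.id Computable.id
        (hpc.comp (Computable.snd.comp Computable.snd))
    refine this.of_eq fun x => ?_
    have : ∀ k, (Nat.rec x (fun _ v => p v) k : ℕ) = p^[k] x := by
      intro k
      induction k with
      | zero => rfl
      | succ k ih => rw [Function.iterate_succ_apply', ← ih]
    exact this x
  have hrp : ∀ x, r (p x) = r x := by
    intro x
    change p^[p x] (p x) = p^[x] x
    rw [← aux_root p hple (p x) x (hple x), ← Function.iterate_succ_apply,
      aux_root p hple x (x + 1) (Nat.le_succ x)]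
  have hrE : ∀ x, (x, r x) ∈ E := by
    intro x
    have : ∀ k, (x, p^[k] x) ∈ E := by
      intro k
      induction k with
      | zero => exact hr x
      | succ k ih => rw [Function.iterate_succ_apply']; exact htr ih (hpE _)
    exact this x
  have hry : ∀ n, r (a n) = r (y n) := fun n => by rw [← hrp (y n), hpy]
  let g : ℕ → ℕ × ℕ × ℕ := fun x =>
    bif inY x then (1, min (a (d x)) (b (d x)), max (a (d x)) (b (d x))) else (0, x, 0)
  have hgc : Computable g := by
    refine Computable.cond hinY ?_ ?_
    · exact Computable.pair (Computable.const 1) (Computable.pair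
        ((Primrec₂.to_comp Primrec.nat_min).comp (ha.comp hd) (hb.comp hd))
        ((Primrec₂.to_comp Primrec.nat_max).comp (ha.comp hd) (hb.comp hd)))
    · exact Computable.pair (Computable.const 0) (Computable.pair Computable.id (Computable.const 0))
  have hgy : ∀ n, g (y n) = (1, min (a n) (b n), max (a n) (b n)) := by
    intro n; simp [g, inY, hdy]
  have hgn : ∀ x, inY x = false → g x = (0, x, 0) := by
    intro x h; simp [g, h]
  have hFE : ∀ i j, r i = r j → (i, j) ∈ E := fun i j h =>
    htr (hrE i) (h ▸ hsym (hrE j))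
  have hGE : ∀ i j, g i = g j → (i, j) ∈ E := by
    intro i j h
    rcases hcase i with ⟨m, rfl⟩ | hi <;> rcases hcase j with ⟨n, rfl⟩ | hj
    · rw [hgy, hgy] at h
      simp only [Prod.mk.injEq, true_and] at h
      have h1 : a n = a m ∨ a n = b m := by omega
      refine htr (hsym (hay m)) (htr ?_ (hay n))
      rcases h1 with h1 | h1
      · rw [h1]; exact hr _
      · rw [h1]; exact hab m
    · rw [hgy, hgn _ hj] at h; simp at h
    · rw [hgy, hgn _ hi] at h; simp at h
    · rw [hgn _ hi, hgn _ hj] at h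
      simp only [Prod.mk.injEq, true_and, and_true] at h
      rw [h]; exact hr _
  have hEF : ∀ i j, (i, j) ∈ E → ∃ u v, r i = r u ∧ g u = g v ∧ r v = r j := by
    intro i j h
    obtain ⟨m, rfl, rfl⟩ := hsurj i j h
    obtain ⟨n, h1, h2⟩ := hsurj _ _ (hsym h)
    refine ⟨y m, y n, hry m, ?_, ?_⟩
    · rw [hgy, hgy, h1, h2, min_comm, max_comm]
    · rw [← hry, h1]
  refine ⟨{q | r q.1 = r q.2}, {q | g q.1 = g q.2}, aux_ker_equiv r, aux_ker_equiv g,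
    aux_ker hrc, aux_ker hgc, ?_, ?_, ?_⟩
  · intro i
    refine Set.infinite_of_not_bddAbove ?_
    rintro ⟨B, hB⟩
    -- infinitely many n with a n = i
    have hinf : {n | a n = i}.Infinite := by
      intro hfin
      obtain ⟨C, hC⟩ := (hfin.image b).bddAbove
      obtain ⟨k, hk, hk2⟩ := hbig i C
      have := hC ⟨k, hk, rfl⟩
      omega
    obtain ⟨n, hn, hn2⟩ := hinf.exists_gt B
    have h1 : y n ≤ B := hB (by
      change r i = r (y n)
      rw [← hry, hn])
    have := hm.le_apply (x := n)
    omega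
  · ext ⟨i, j⟩
    constructor
    · intro h
      obtain ⟨u, v, h1, h2, h3⟩ := hEF i j h
      exact ⟨v, ⟨u, h1, h2⟩, h3⟩
    · rintro ⟨v, ⟨u, h1, h2⟩, h3⟩
      exact htr (htr (hFE _ _ h1) (hGE _ _ h2)) (hFE _ _ h3)
  · ext ⟨i, j⟩
    constructor
    · intro h
      obtain ⟨u, v, h1, h2, h3⟩ := hEF i j h
      have e1 : (i, u) ∈ ({q : ℕ × ℕ | r q.1 = r q.2} ∪ {q | g q.1 = g q.2}) := Or.inl h1
      have e2 : (u, v) ∈ ({q : ℕ × ℕ | r q.1 = r q.2} ∪ {q | g q.1 = g q.2}) := Or.inr h2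
      have e3 : (v, j) ∈ ({q : ℕ × ℕ | r q.1 = r q.2} ∪ {q | g q.1 = g q.2}) := Or.inl h3
      exact Relation.TransGen.tail (Relation.TransGen.tail (Relation.TransGen.single e1) e2) e3
    · intro h
      have h' : Relation.TransGen (fun i j => (i, j) ∈ ({q : ℕ × ℕ | r q.1 = r q.2} ∪ {q | g q.1 = g q.2})) i j := h
      have one : ∀ i j, (i, j) ∈ ({q : ℕ × ℕ | r q.1 = r q.2} ∪ {q | g q.1 = g q.2}) → (i, j) ∈ E :=
        fun i j h => h.elim (hFE i j) (hGE i j)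
      clear h
      induction h' with
      | single h => exact one _ _ h
      | tail _ h ih => exact htr ih (one _ _ h)
end

section
/- For a semi-decidable equivalence relation E on ℕ, the following three conditions are equivalent: (i) some enumeration of E has a coding; (ii) every equivalence class of E is infinite (E is IC); (iii) every enumeration of E has a coding. -/
theorem exists_step {ν : ℕ → ℕ × ℕ} {E : Set (ℕ × ℕ)} (hν : IsEnumeration ν E) (hIC : IC E)
    (i x B : ℕ) : ∃ k, x < k ∧ (ν k).1 = i ∧ B < (ν k).2 := by
  obtain ⟨j, hj, hlt⟩ := (hIC i).exists_gt
    (max B ((Finset.range (x + 1)).sup (fun k => (ν k).2)))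
  have hj' : (i, j) ∈ E := hj
  rw [hν.2] at hj'
  obtain ⟨k, -, hk⟩ := hj'
  have h1 : B < j := lt_of_le_of_lt (le_max_left _ _) hlt
  have h2 := lt_of_le_of_lt (le_max_right _ _) hlt
  refine ⟨k, ?_, by rw [hk], by rw [hk]; exact h1⟩
  by_contra hc
  have h3 : (ν k).2 ≤ (Finset.range (x + 1)).sup (fun k => (ν k).2) :=
    Finset.le_sup (f := fun k => (ν k).2) (Finset.mem_range.2 (by omega))
  rw [hk] at h3
  simp only at h3
  omega

theorem exists_computable_step {b : ℕ × ℕ → ℕ → Bool} (hb : Computable₂ b)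
    (h : ∀ a, ∃ k, b a k = true) :
    ∃ g : ℕ × ℕ → ℕ, Computable g ∧ ∀ a, b a (g a) = true := by
  refine ⟨fun a => Nat.find (h a), ?_, fun a => Nat.find_spec (h a)⟩
  have := Partrec.rfind hb.partrec₂
  refine Partrec.of_eq this fun a => ?_
  rw [PFun.coe_val, Part.eq_some_iff, Nat.mem_rfind]
  refine ⟨?_, fun {m} hm => ?_⟩
  · simpa using (Nat.find_spec (h a))
  · simpa using Nat.find_min (h a) hm

theorem exists_coding {ν : ℕ → ℕ × ℕ} {E : Set (ℕ × ℕ)} (hν : IsEnumeration ν E) (hIC : IC E) :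
    ∃ ξ : ℕ → ℕ, IsCoding ν ξ := by
  have hc := hν.1
  let b : ℕ × ℕ → ℕ → Bool := fun a k =>
    (decide (a.2 < k) && decide ((ν k).1 = (ν (a.1 + 1)).1)) &&
    (decide (1 < (ν k).2) &&
      (decide ((ν (a.1 + 1)).1 < (ν k).2) && decide ((ν a.2).2 < (ν k).2)))
  have hlt : Computable₂ (fun x y : ℕ => decide (x < y)) := Primrec.nat_lt.decide.to_comp
  have heq : Computable₂ (fun x y : ℕ => decide (x = y)) :=
    (Primrec.eq (α := ℕ)).decide.to_comp
  have hand : Computable₂ and := Primrec.and.to_comp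
  have hk : Computable (fun p : (ℕ × ℕ) × ℕ => ν p.2) := hc.comp Computable.snd
  have hk1 := Computable.fst.comp hk
  have hk2 := Computable.snd.comp hk
  have hn1 : Computable (fun p : (ℕ × ℕ) × ℕ => (ν (p.1.1 + 1)).1) :=
    Computable.fst.comp (hc.comp (Computable.succ.comp (Computable.fst.comp Computable.fst)))
  have hx : Computable (fun p : (ℕ × ℕ) × ℕ => p.1.2) := Computable.snd.comp Computable.fst
  have hx2 := Computable.snd.comp (hc.comp hx)
  have hb : Computable₂ b := by
    show Computable _
    exact hand.comp (hand.comp (hlt.comp hx Computable.snd) (heq.comp hk1 hn1))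
      (hand.comp (hlt.comp (Computable.const 1) hk2)
        (hand.comp (hlt.comp hn1 hk2) (hlt.comp hx2 hk2)))
  obtain ⟨g, hg, hgs⟩ := exists_computable_step hb (by
    intro a
    obtain ⟨k, h1, h2, h3⟩ := exists_step hν hIC (ν (a.1 + 1)).1 a.2
      (max 1 (max (ν (a.1 + 1)).1 (ν a.2).2))
    refine ⟨k, ?_⟩
    simp only [max_lt_iff] at h3
    simp [b, h1, h2, h3])
  simp only [b, Bool.and_eq_true, decide_eq_true_eq] at hgs
  let ξ : ℕ → ℕ := fun n => Nat.rec (motive := fun _ => ℕ) 1 (fun y ih => g (y, ih)) n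
  have hξ : Computable ξ :=
    Computable.nat_rec (h := fun _ p => g p) Computable.id (Computable.const 1)
      (hg.comp Computable.snd)
  have hs : ∀ n, ξ (n + 1) = g (n, ξ n) := fun n => rfl
  have key := fun n => hgs (n, ξ n)
  simp only [← hs] at key
  refine ⟨ξ, hξ, (key 0).1.1, (key 0).1.2, max_lt (key 0).2.1 (key 0).2.2.1, fun n _ => ?_⟩
  obtain ⟨⟨h1, h2⟩, h3, h4, h5⟩ := key n
  exact ⟨h1, h2, max_lt (by rw [h2]; exact h4) h5⟩

theorem ic_of_coding {ν : ℕ → ℕ × ℕ} {ξ : ℕ → ℕ} {E : Set (ℕ × ℕ)} (hE : IsEquivRel E)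
    (hν : IsEnumeration ν E) (hξ : IsCoding ν ξ) : IC E := by
  obtain ⟨-, h1, h2, h3, h4⟩ := hξ
  have hpos : ∀ n, 1 ≤ n → 1 ≤ ξ n ∧ (ν (ξ n)).1 = (ν n).1 ∧ (ν n).1 < (ν (ξ n)).2 := by
    intro n hn
    induction n, hn using Nat.le_induction with
    | base => exact ⟨h1.le, h2, lt_of_le_of_lt (le_max_right _ _) h3⟩
    | succ n hn ih =>
      obtain ⟨a, b, c⟩ := h4 n hn
      refine ⟨by omega, b, ?_⟩
      rw [← b]
      exact lt_of_le_of_lt (le_max_left _ _) c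
  intro i hfin
  obtain ⟨m, hm, hmax⟩ := Set.exists_max_image _ id hfin ⟨i, hE.1 i⟩
  have hmm := hE.1 m
  rw [hν.2] at hmm
  obtain ⟨n, hn, hnm⟩ := hmm
  obtain ⟨a, b, c⟩ := hpos n hn
  rw [hnm] at b c
  have hmem : (m, (ν (ξ n)).2) ∈ E := by
    rw [hν.2]
    exact ⟨ξ n, a, Prod.ext b rfl⟩
  have := hmax _ (hE.2.2 hm hmem)
  simp only [id] at this c
  omega

theorem stmt_3 (E : Set (ℕ × ℕ)) (hE : IsEquivRel E) (hsd : SemiDecidableRel E) :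
    List.TFAE [
      ∃ (ν : ℕ → ℕ × ℕ) (ξ : ℕ → ℕ), IsEnumeration ν E ∧ IsCoding ν ξ,
      IC E,
      ∀ ν : ℕ → ℕ × ℕ, IsEnumeration ν E → ∃ ξ : ℕ → ℕ, IsCoding ν ξ] := by
  tfae_have 1 → 2 := fun ⟨_, _, hν, hξ⟩ => ic_of_coding hE hν hξ
  tfae_have 2 → 3 := fun h _ hν => exists_coding hν h
  tfae_have 3 → 1 := fun h => by
    obtain ⟨ν, hν⟩ := hsd
    obtain ⟨ξ, hξ⟩ := h ν hν
    exact ⟨ν, ξ, hν, hξ⟩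
  tfae_finish
end

section
/- There exist decidable equivalence relations F and G on ℕ such that F ∨ G (the transitive closure of F ∪ G) is a semi-decidable equivalence relation in which every equivalence class is finite (FC), F ∨ G is not decidable, and F ∨ G equals the composition FGF. -/
open Nat.Partrec in
def xP (e s : ℕ) : Bool := (Code.evaln s (Denumerable.ofNat Code e) 0).isSome

def xT (e s : ℕ) : Bool := xP e s && !(xP e (s - 1))

def xe (n : ℕ) : ℕ := (Nat.unpair (n / 2)).1
def xs (n : ℕ) : ℕ := (Nat.unpair (n / 2)).2
def enc (e s b : ℕ) : ℕ := 2 * Nat.pair e s + b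

def xf (n : ℕ) : ℕ := if xT (xe n) (xs n) = true then enc (xe n) 0 (n % 2) else n
def xg (n : ℕ) : ℕ := if xs n = 0 then n else enc (xe n) (xs n) 0

open Classical in
noncomputable def xh (n : ℕ) : ℕ :=
  if xs n = 0 then (if ∃ t, xT (xe n) t = true then enc (xe n) 0 0 else n)
  else if xT (xe n) (xs n) = true then enc (xe n) 0 0 else enc (xe n) (xs n) 0

theorem xP_mono {e s t : ℕ} (h : s ≤ t) (hs : xP e s = true) : xP e t = true := by
  unfold xP at *
  obtain ⟨x, hx⟩ := Option.isSome_iff_exists.1 hs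
  exact Option.isSome_iff_exists.2 ⟨x, Nat.Partrec.Code.evaln_mono h hx⟩

theorem xT_zero (e : ℕ) : xT e 0 = false := by
  simp [xT]

theorem xT_uniq {e s t : ℕ} (hs : xT e s = true) (ht : xT e t = true) : s = t := by
  have key : ∀ s t, xT e s = true → xT e t = true → ¬ s < t := by
    intro s t hs ht h
    simp only [xT, Bool.and_eq_true, Bool.not_eq_true'] at hs ht
    have := xP_mono (e := e) (show s ≤ t - 1 by omega) hs.1
    simp_all
  have := key s t hs ht
  have := key t s ht hs
  omega

theorem xT_ex (e : ℕ) : (∃ t, xT e t = true) ↔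
    (Nat.Partrec.Code.eval (Denumerable.ofNat Nat.Partrec.Code e) 0).Dom := by
  have h1 : (∃ t, xT e t = true) ↔ ∃ t, xP e t = true := by
    constructor
    · rintro ⟨t, ht⟩
      simp only [xT, Bool.and_eq_true] at ht
      exact ⟨t, ht.1⟩
    · intro h
      classical
      refine ⟨Nat.find h, ?_⟩
      have h0 : xP e 0 = false := by simp [xP, Nat.Partrec.Code.evaln]
      have hs := Nat.find_spec h
      have hp : Nat.find h ≠ 0 := by
        intro h'; rw [h'] at hs; simp_all
      have := Nat.find_min h (show Nat.find h - 1 < Nat.find h by omega)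
      simp only [xT, hs, Bool.true_and]
      simpa using this
  rw [h1, Part.dom_iff_mem]
  simp only [Nat.Partrec.Code.evaln_complete, xP, Option.isSome_iff_exists]
  exact exists_comm

theorem xe_enc {e s b : ℕ} (hb : b < 2) : xe (enc e s b) = e := by
  have : (2 * Nat.pair e s + b) / 2 = Nat.pair e s := by omega
  simp [xe, enc, this]
theorem xs_enc {e s b : ℕ} (hb : b < 2) : xs (enc e s b) = s := by
  have : (2 * Nat.pair e s + b) / 2 = Nat.pair e s := by omega
  simp [xs, enc, this]
theorem mod_enc {e s b : ℕ} (hb : b < 2) : enc e s b % 2 = b := by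
  simp only [enc]; omega

theorem enc_surj (n : ℕ) : ∃ e s b, b < 2 ∧ n = enc e s b := by
  refine ⟨xe n, xs n, n % 2, by omega, ?_⟩
  simp only [enc, xe, xs, Nat.pair_unpair]; omega

theorem enc_inj {e s b e' s' b' : ℕ} (hb : b < 2) (hb' : b' < 2)
    (h : enc e s b = enc e' s' b') : e = e' ∧ s = s' ∧ b = b' := by
  refine ⟨?_, ?_, ?_⟩
  · have := congrArg xe h
    rwa [xe_enc hb, xe_enc hb'] at this
  · have := congrArg xs h
    rwa [xs_enc hb, xs_enc hb'] at this
  · have := congrArg (fun n => n % 2) h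
    simpa only [mod_enc hb, mod_enc hb'] using this

theorem xf_enc {e s b : ℕ} (hb : b < 2) :
    xf (enc e s b) = if xT e s = true then enc e 0 b else enc e s b := by
  simp only [xf, xe_enc hb, xs_enc hb, mod_enc hb]
theorem xg_enc {e s b : ℕ} (hb : b < 2) :
    xg (enc e s b) = if s = 0 then enc e s b else enc e s 0 := by
  simp only [xg, xe_enc hb, xs_enc hb]
open Classical in
theorem xh_enc {e s b : ℕ} (hb : b < 2) :
    xh (enc e s b) = if s = 0 then (if ∃ t, xT e t = true then enc e 0 0 else enc e s b)
      else if xT e s = true then enc e 0 0 else enc e s 0 := by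
  simp only [xh, xe_enc hb, xs_enc hb]

theorem xh_xf (n : ℕ) : xh (xf n) = xh n := by
  obtain ⟨e, s, b, hb, rfl⟩ := enc_surj n
  rw [xf_enc hb]
  split_ifs with h
  · have hs : s ≠ 0 := by rintro rfl; simp [xT_zero] at h
    have : ∃ t, xT e t = true := ⟨s, h⟩
    rw [xh_enc hb, xh_enc hb]; simp [hs, h, this]
  · rfl

theorem xh_xg (n : ℕ) : xh (xg n) = xh n := by
  obtain ⟨e, s, b, hb, rfl⟩ := enc_surj n
  rw [xg_enc hb]
  split_ifs with h
  · rfl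
  · rw [xh_enc hb, xh_enc (by norm_num)]; simp [h]

theorem xf_xf (n : ℕ) : xf (xf n) = xf n := by
  obtain ⟨e, s, b, hb, rfl⟩ := enc_surj n
  rw [xf_enc hb]
  split_ifs with h
  · rw [xf_enc hb]; simp [xT_zero]
  · rw [xf_enc hb]; simp [h]

theorem xmain' {i k : ℕ} (h : xh i = xh k) (hi : xf i = i) (hk : xf k = k) :
    ∃ j j', xf i = xf j ∧ xg j = xg j' ∧ xf j' = xf k := by
  obtain ⟨e, s, b, hb, rfl⟩ := enc_surj i
  obtain ⟨e', s', b', hb', rfl⟩ := enc_surj k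
  have z : (0:ℕ) < 2 := by norm_num
  have a1 : xT e s = false := by
    rw [xf_enc hb] at hi
    by_contra hc
    have hc : xT e s = true := by simpa using hc
    rw [if_pos hc] at hi
    have := (enc_inj hb hb hi).2.1
    rw [← this, xT_zero] at hc; simp at hc
  have a2 : xT e' s' = false := by
    rw [xf_enc hb'] at hk
    by_contra hc
    have hc : xT e' s' = true := by simpa using hc
    rw [if_pos hc] at hk
    have := (enc_inj hb' hb' hk).2.1
    rw [← this, xT_zero] at hc; simp at hc
  rw [xh_enc hb, xh_enc hb'] at h
  simp only [a1, a2, Bool.false_eq_true, if_false] at h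
  have hee : e = e' ∧ s = s' := by
    split_ifs at h
    all_goals
      have := enc_inj (by assumption) (by assumption) h
      constructor <;> omega
  obtain ⟨rfl, rfl⟩ := hee
  by_cases hs : s = 0
  · subst hs
    by_cases hK : ∃ t, xT e t = true
    · obtain ⟨t, ht⟩ := hK
      have ht0 : t ≠ 0 := by rintro rfl; simp [xT_zero] at ht
      refine ⟨enc e t b, enc e t b', ?_, ?_, ?_⟩
      · rw [xf_enc hb, xf_enc hb]; simp [ht]
      · rw [xg_enc hb, xg_enc hb']; simp [ht0]
      · rw [xf_enc hb', xf_enc hb']; simp [ht]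
    · simp only [hK, if_true, if_false] at h
      exact ⟨_, _, rfl, congrArg xg h, rfl⟩
  · refine ⟨_, _, rfl, ?_, rfl⟩
    rw [xg_enc hb, xg_enc hb']; simp [hs]

theorem xmain {i k : ℕ} (h : xh i = xh k) :
    ∃ j j', xf i = xf j ∧ xg j = xg j' ∧ xf j' = xf k := by
  obtain ⟨j, j', h1, h2, h3⟩ := xmain' (i := xf i) (k := xf k)
    (by rw [xh_xf, xh_xf, h]) (xf_xf i) (xf_xf k)
  rw [xf_xf] at h1 h3
  exact ⟨j, j', h1, h2, h3⟩

def xF : Set (ℕ × ℕ) := {p | xf p.1 = xf p.2}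
def xG : Set (ℕ × ℕ) := {p | xg p.1 = xg p.2}

theorem tc_chain {i j j' k : ℕ} (h1 : xf i = xf j) (h2 : xg j = xg j') (h3 : xf j' = xf k) :
    (i, k) ∈ tc (xF ∪ xG) := by
  have a1 : (i, j) ∈ xF ∪ xG := Or.inl h1
  have a2 : (j, j') ∈ xF ∪ xG := Or.inr h2
  have a3 : (j', k) ∈ xF ∪ xG := Or.inl h3
  exact Relation.TransGen.tail (Relation.TransGen.tail (Relation.TransGen.single a1) a2) a3

theorem tc_eq : tc (xF ∪ xG) = {p | xh p.1 = xh p.2} := by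
  ext ⟨i, k⟩
  simp only [tc, Set.mem_setOf_eq]
  constructor
  · intro h
    induction h with
    | single h =>
      rcases h with h | h
      · rw [← xh_xf i, show xf i = xf _ from h, xh_xf]
      · rw [← xh_xg i, show xg i = xg _ from h, xh_xg]
    | @tail b c _ h ih =>
      rw [ih]
      rcases h with h | h
      · rw [← xh_xf b, show xf b = xf _ from h, xh_xf]
      · rw [← xh_xg b, show xg b = xg _ from h, xh_xg]
  · intro h
    obtain ⟨j, j', h1, h2, h3⟩ := xmain h
    exact tc_chain h1 h2 h3

theorem comp_eq : relComp (relComp xF xG) xF = {p | xh p.1 = xh p.2} := by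
  ext ⟨i, k⟩
  constructor
  · rintro ⟨j', ⟨j, h1, h2⟩, h3⟩
    rw [← tc_eq]
    exact tc_chain h1 h2 h3
  · intro h
    obtain ⟨j, j', h1, h2, h3⟩ := xmain h
    exact ⟨j', ⟨j, h1, h2⟩, h3⟩

theorem ker_equiv (f : ℕ → ℕ) : IsEquivRel {p | f p.1 = f p.2} :=
  ⟨fun _ => rfl, fun _ _ h => Eq.symm h, fun _ _ _ h h' => Eq.trans h h'⟩

theorem xP_primrec : Primrec₂ xP := by
  unfold xP
  exact Primrec.option_isSome.comp (Nat.Partrec.Code.primrec_evaln.comp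
    (Primrec.pair (Primrec.pair Primrec.snd ((Primrec.ofNat _).comp Primrec.fst))
      (Primrec.const 0)))

theorem xT_primrec : Primrec₂ xT :=
  Primrec.and.comp xP_primrec
    (Primrec.not.comp (xP_primrec.comp Primrec.fst (Primrec.pred.comp Primrec.snd)))

theorem half_primrec : Primrec (fun n : ℕ => n / 2) :=
  Primrec.nat_div.comp Primrec.id (Primrec.const 2)

theorem xe_primrec : Primrec xe := Primrec.fst.comp (Primrec.unpair.comp half_primrec)
theorem xs_primrec : Primrec xs := Primrec.snd.comp (Primrec.unpair.comp half_primrec)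

theorem enc_primrec {α} [Primcodable α] {e s b : α → ℕ} (he : Primrec e) (hs : Primrec s)
    (hb : Primrec b) : Primrec (fun a => enc (e a) (s a) (b a)) :=
  Primrec.nat_add.comp (Primrec.nat_mul.comp (Primrec.const 2)
    (Primrec₂.natPair.comp he hs)) hb

theorem xf_primrec : Primrec xf :=
  Primrec.ite (Primrec.eq.comp (xT_primrec.comp xe_primrec xs_primrec) (Primrec.const true))
    (enc_primrec xe_primrec (Primrec.const 0) (Primrec.nat_mod.comp Primrec.id (Primrec.const 2)))
    Primrec.id

theorem xg_primrec : Primrec xg :=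
  Primrec.ite (Primrec.eq.comp xs_primrec (Primrec.const 0))
    Primrec.id (enc_primrec xe_primrec xs_primrec (Primrec.const 0))

theorem ker_dec {f : ℕ → ℕ} (hf : Primrec f) : DecidableRelSet {p | f p.1 = f p.2} :=
  PrimrecPred.computablePred
    (Primrec.eq.comp (hf.comp Primrec.fst) (hf.comp Primrec.snd))

def q1 (n : ℕ) : ℕ := (Nat.unpair (Nat.unpair (n - 1)).1).1
def q2 (n : ℕ) : ℕ := (Nat.unpair (Nat.unpair (n - 1)).1).2
def q3 (n : ℕ) : ℕ := (Nat.unpair (Nat.unpair (n - 1)).2).1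
def q4 (n : ℕ) : ℕ := (Nat.unpair (Nat.unpair (n - 1)).2).2

def xnu (n : ℕ) : ℕ × ℕ :=
  if xf (q1 n) = xf (q2 n) ∧ xg (q2 n) = xg (q3 n) ∧ xf (q3 n) = xf (q4 n)
    then (q1 n, q4 n) else (0, 0)

theorem xnu_primrec : Primrec xnu := by
  have h1 : Primrec q1 := Primrec.fst.comp (Primrec.unpair.comp
    (Primrec.fst.comp (Primrec.unpair.comp Primrec.pred)))
  have h2 : Primrec q2 := Primrec.snd.comp (Primrec.unpair.comp
    (Primrec.fst.comp (Primrec.unpair.comp Primrec.pred)))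
  have h3 : Primrec q3 := Primrec.fst.comp (Primrec.unpair.comp
    (Primrec.snd.comp (Primrec.unpair.comp Primrec.pred)))
  have h4 : Primrec q4 := Primrec.snd.comp (Primrec.unpair.comp
    (Primrec.snd.comp (Primrec.unpair.comp Primrec.pred)))
  exact Primrec.ite
    ((Primrec.eq.comp (xf_primrec.comp h1) (xf_primrec.comp h2)).and
      ((Primrec.eq.comp (xg_primrec.comp h2) (xg_primrec.comp h3)).and
        (Primrec.eq.comp (xf_primrec.comp h3) (xf_primrec.comp h4))))
    (Primrec.pair h1 h4) (Primrec.const (0, 0))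

theorem xsemi : SemiDecidableRel (relComp (relComp xF xG) xF) := by
  refine ⟨xnu, xnu_primrec.to_comp, ?_⟩
  ext ⟨i, k⟩
  constructor
  · rintro ⟨j', ⟨j, h1, h2⟩, h3⟩
    refine ⟨Nat.pair (Nat.pair i j) (Nat.pair j' k) + 1, by omega, ?_⟩
    have h1 : xf i = xf j := h1
    have h2 : xg j = xg j' := h2
    have h3 : xf j' = xf k := h3
    simp [xnu, q1, q2, q3, q4, h1, h2, h3]
  · rintro ⟨n, -, h⟩
    unfold xnu at h
    split_ifs at h with hc
    · obtain ⟨h1, h2, h3⟩ := hc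
      rw [← h]
      exact ⟨q3 n, ⟨q2 n, h1, h2⟩, h3⟩
    · rw [← h]
      exact ⟨0, ⟨0, rfl, rfl⟩, rfl⟩

theorem xFC : FC {p | xh p.1 = xh p.2} := by
  intro i
  have key : ∀ c, {j | xh j = c}.Finite := by
    intro c
    obtain ⟨e, s, b, hb, rfl⟩ := enc_surj c
    obtain ⟨t, ht⟩ : ∃ t, ∀ t', xT e t' = true → t' = t := by
      by_cases hK : ∃ t, xT e t = true
      · obtain ⟨t, h⟩ := hK
        exact ⟨t, fun t' h' => xT_uniq h' h⟩
      · exact ⟨0, fun t' h' => (hK ⟨t', h'⟩).elim⟩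
    refine Set.Finite.subset (Set.toFinite
      {enc e 0 0, enc e 0 1, enc e s 0, enc e s 1, enc e t 0, enc e t 1}) ?_
    intro j hj
    obtain ⟨e', s', b', hb', rfl⟩ := enc_surj j
    have hj : xh (enc e' s' b') = enc e s b := hj
    have z : (0:ℕ) < 2 := by norm_num
    have hh : e' = e ∧ (s' = 0 ∨ s' = s ∨ s' = t) := by
      rw [xh_enc hb'] at hj
      split_ifs at hj with c1 c2 c3
      all_goals
        have hq := enc_inj (by assumption) (by assumption) hj
        obtain ⟨rfl, -⟩ := hq
        refine ⟨rfl, ?_⟩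
      · exact Or.inl c1
      · exact Or.inl c1
      · exact Or.inr (Or.inr (ht _ c3))
      · exact Or.inr (Or.inl (enc_inj (by assumption) (by assumption) hj).2.1)
    obtain ⟨rfl, h⟩ := hh
    have : b' = 0 ∨ b' = 1 := by omega
    rcases this with rfl | rfl <;> rcases h with rfl | rfl | rfl <;> simp
  refine (key (xh i)).subset ?_
  intro j hj
  exact Eq.symm hj

theorem xundec : ¬ DecidableRelSet {p | xh p.1 = xh p.2} := by
  intro h
  apply ComputablePred.halting_problem 0
  refine ComputablePred.computable_of_manyOneReducible
    ⟨fun c => (enc (Encodable.encode c) 0 0, enc (Encodable.encode c) 0 1), ?_, ?_⟩ h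
  · exact (Primrec.pair
      (enc_primrec Primrec.encode (Primrec.const 0) (Primrec.const 0))
      (enc_primrec Primrec.encode (Primrec.const 0) (Primrec.const 1))).to_comp
  · intro c
    have hx := xT_ex (Encodable.encode c)
    rw [Denumerable.ofNat_encode] at hx
    refine hx.symm.trans ?_
    change _ ↔ xh (enc (Encodable.encode c) 0 0) = xh (enc (Encodable.encode c) 0 1)
    rw [xh_enc (by norm_num), xh_enc (by norm_num)]
    by_cases hK : ∃ t, xT (Encodable.encode c) t = true
    · simp [hK]
    · simp only [hK, if_true, if_false, false_iff]
      intro h'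
      have := (enc_inj (by norm_num) (by norm_num) h').2.2
      omega

theorem stmt_4 :
    ∃ F G : Set (ℕ × ℕ),
      IsEquivRel F ∧ IsEquivRel G ∧ DecidableRelSet F ∧ DecidableRelSet G ∧
      IsEquivRel (tc (F ∪ G)) ∧ SemiDecidableRel (tc (F ∪ G)) ∧ FC (tc (F ∪ G)) ∧
      ¬ DecidableRelSet (tc (F ∪ G)) ∧
      tc (F ∪ G) = relComp (relComp F G) F := by
  refine ⟨xF, xG, ker_equiv xf, ker_equiv xg, ker_dec xf_primrec, ker_dec xg_primrec,
    ?_, ?_, ?_, ?_, ?_⟩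
  · rw [tc_eq]; exact ker_equiv xh
  · rw [tc_eq, ← comp_eq]; exact xsemi
  · rw [tc_eq]; exact xFC
  · rw [tc_eq]; exact xundec
  · rw [tc_eq, comp_eq]
end

section
/- There is a semi-decidable equivalence relation E on ℕ, with every equivalence class finite (FC), such that E is not the transitive closure of any decidable relation on ℕ. (Such an E is given by: (x,y) ∈ E iff x = y, or min{x,y} is even with min{x,y}/2 ∈ A and |x−y| = 1, where A is any semi-decidable but not decidable subset of ℕ.) -/
open Nat.Partrec in
/-- enumerator of the halting set -/
def haltG (m : ℕ) : ℕ :=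
  bif (Code.evaln m.unpair.1 (Denumerable.ofNat Code m.unpair.2) 0).isSome then m.unpair.2
  else Encodable.encode Code.zero

open Nat.Partrec in
/-- the halting set -/
def haltA : Set ℕ := {e | (Code.eval (Denumerable.ofNat Code e) 0).Dom}

open Nat.Partrec in
theorem haltG_comp : Computable haltG := by
  apply Primrec.to_comp
  unfold haltG
  have h1 : Primrec fun m : ℕ => m.unpair.1 := Primrec.fst.comp Primrec.unpair
  have h2 : Primrec fun m : ℕ => m.unpair.2 := Primrec.snd.comp Primrec.unpair
  refine Primrec.cond ?_ h2 (Primrec.const _)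
  refine Primrec.option_isSome.comp ?_
  exact Code.primrec_evaln.comp
    (Primrec.pair (Primrec.pair h1 ((Primrec.ofNat Code).comp h2)) (Primrec.const 0))

open Nat.Partrec in
theorem haltG_range (a : ℕ) : a ∈ haltA ↔ ∃ m, haltG m = a := by
  constructor
  · intro h
    obtain ⟨x, hx⟩ := Part.dom_iff_mem.1 h
    obtain ⟨k, hk⟩ := Code.evaln_complete.1 hx
    refine ⟨Nat.pair k a, ?_⟩
    have hk' : Code.evaln k (Denumerable.ofNat Code a) 0 = some x := hk
    simp [haltG, hk']
  · rintro ⟨m, rfl⟩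
    unfold haltG
    cases h : (Code.evaln m.unpair.1 (Denumerable.ofNat Code m.unpair.2) 0) with
    | none =>
      simp only [Option.isSome_none, cond_false]
      show (Code.eval (Denumerable.ofNat Code (Encodable.encode Code.zero)) 0).Dom
      rw [Denumerable.ofNat_encode]
      exact trivial
    | some x =>
      simp only [Option.isSome_some, cond_true]
      exact Part.dom_iff_mem.2 ⟨x, Code.evaln_sound h⟩

open Nat.Partrec in
theorem haltA_not : ¬ ComputablePred (fun a => a ∈ haltA) := by
  intro h
  apply ComputablePred.halting_problem 0
  refine ComputablePred.computable_of_manyOneReducible ?_ h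
  refine ⟨Encodable.encode, Computable.encode, fun c => ?_⟩
  simp [haltA]

/-- enumerator of the relation -/
def haltNu (n : ℕ) : ℕ × ℕ :=
  bif (n.pred.unpair.1 == 0) then (n.pred.unpair.2, n.pred.unpair.2)
  else bif (n.pred.unpair.1 == 1) then
    (2 * haltG n.pred.unpair.2, 2 * haltG n.pred.unpair.2 + 1)
  else (2 * haltG n.pred.unpair.2 + 1, 2 * haltG n.pred.unpair.2)

theorem haltNu_comp : Computable haltNu := by
  unfold haltNu
  have h1 : Primrec fun m : ℕ => m.pred.unpair.1 :=
    Primrec.fst.comp (Primrec.unpair.comp Primrec.pred)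
  have h2 : Primrec fun m : ℕ => m.pred.unpair.2 :=
    Primrec.snd.comp (Primrec.unpair.comp Primrec.pred)
  have hg : Computable fun n : ℕ => 2 * haltG n.pred.unpair.2 :=
    (Primrec.nat_mul.comp (Primrec.const 2) Primrec.id).to_comp.comp
      (haltG_comp.comp h2.to_comp)
  have hg1 := Computable.succ.comp hg
  refine Computable.cond (Primrec.beq.comp h1 (Primrec.const 0)).to_comp
    (h2.to_comp.pair h2.to_comp) ?_
  exact Computable.cond (Primrec.beq.comp h1 (Primrec.const 1)).to_comp
    (hg.pair hg1) (hg1.pair hg)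

/-- the relation -/
def haltE : Set (ℕ × ℕ) := {p : ℕ × ℕ | p.1 = p.2 ∨
          (min p.1 p.2 % 2 = 0 ∧ min p.1 p.2 / 2 ∈ haltA ∧
            max p.1 p.2 = min p.1 p.2 + 1)}

theorem mem_haltE (x y : ℕ) : (x, y) ∈ haltE ↔ x = y ∨
    (∃ a ∈ haltA, x = 2 * a ∧ y = 2 * a + 1) ∨ (∃ a ∈ haltA, x = 2 * a + 1 ∧ y = 2 * a) := by
  show (x = y ∨ (min x y % 2 = 0 ∧ min x y / 2 ∈ haltA ∧ max x y = min x y + 1)) ↔ _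
  constructor
  · rintro (h | ⟨h1, h2, h3⟩)
    · exact Or.inl h
    · rcases le_total x y with h | h
      · exact Or.inr (Or.inl ⟨_, h2, by omega, by omega⟩)
      · exact Or.inr (Or.inr ⟨_, h2, by omega, by omega⟩)
  · rintro (h | ⟨a, ha, rfl, rfl⟩ | ⟨a, ha, rfl, rfl⟩)
    · exact Or.inl h
    · refine Or.inr ⟨by omega, ?_, by omega⟩
      rwa [show min (2 * a) (2 * a + 1) / 2 = a by omega]
    · refine Or.inr ⟨by omega, ?_, by omega⟩
      rwa [show min (2 * a + 1) (2 * a) / 2 = a by omega]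

theorem haltE_equiv : IsEquivRel haltE := by
  refine ⟨fun n => Or.inl rfl, ?_, ?_⟩
  · intro i j h
    rw [mem_haltE] at *
    rcases h with h | ⟨a, ha, h1, h2⟩ | ⟨a, ha, h1, h2⟩
    · exact Or.inl h.symm
    · exact Or.inr (Or.inr ⟨a, ha, h2, h1⟩)
    · exact Or.inr (Or.inl ⟨a, ha, h2, h1⟩)
  · intro i j k h h'
    have e := h
    have e' := h'
    rw [mem_haltE] at h h'
    rcases h with rfl | ⟨a, ha, h1, h2⟩ | ⟨a, ha, h1, h2⟩
    · exact e'
    all_goals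
      rcases h' with rfl | ⟨b, hb, h3, h4⟩ | ⟨b, hb, h3, h4⟩
      · exact e
      all_goals
        exact Or.inl (show i = k by omega)

theorem haltE_semi : SemiDecidableRel haltE := by
  refine ⟨haltNu, haltNu_comp, ?_⟩
  ext ⟨x, y⟩
  rw [mem_haltE]
  constructor
  · rintro (rfl | ⟨a, ha, rfl, rfl⟩ | ⟨a, ha, rfl, rfl⟩)
    · exact ⟨Nat.pair 0 x + 1, by omega, by simp [haltNu]⟩
    · obtain ⟨m, rfl⟩ := (haltG_range a).1 ha
      exact ⟨Nat.pair 1 m + 1, by omega, by simp [haltNu]⟩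
    · obtain ⟨m, rfl⟩ := (haltG_range a).1 ha
      exact ⟨Nat.pair 2 m + 1, by omega, by simp [haltNu]⟩
  · rintro ⟨n, -, h⟩
    unfold haltNu at h
    have hm : haltG n.pred.unpair.2 ∈ haltA := (haltG_range _).2 ⟨_, rfl⟩
    generalize haltG n.pred.unpair.2 = a at *
    cases h0 : (n.pred.unpair.1 == 0) <;> cases h1 : (n.pred.unpair.1 == 1) <;>
      simp only [h0, h1, cond_true, cond_false, Prod.mk.injEq] at h
    · exact Or.inr (Or.inr ⟨a, hm, h.1.symm, h.2.symm⟩)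
    · exact Or.inr (Or.inl ⟨a, hm, h.1.symm, h.2.symm⟩)
    · exact Or.inl (h.1.symm.trans h.2)
    · exact Or.inl (h.1.symm.trans h.2)

theorem haltE_fc : FC haltE := by
  intro i
  refine (Set.finite_Iic (i + 1)).subset ?_
  intro j hj
  have hj' : (i, j) ∈ haltE := hj
  rw [mem_haltE] at hj'
  show j ≤ i + 1
  rcases hj' with h | ⟨a, ha, h1, h2⟩ | ⟨a, ha, h1, h2⟩ <;> omega

theorem haltE_not_tc : ¬ ∃ R : Set (ℕ × ℕ), DecidableRelSet R ∧ haltE = tc R := by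
  rintro ⟨R, hR, hE⟩
  have hsub : ∀ x y, (x, y) ∈ R → (x, y) ∈ haltE := fun x y h => by
    rw [hE]; exact Relation.TransGen.single h
  have step : ∀ a z, (2 * a, z) ∈ R → z = 2 * a ∨ (2 * a, 2 * a + 1) ∈ R := by
    intro a z h
    have h' := hsub _ _ h
    rw [mem_haltE] at h'
    rcases h' with h1 | ⟨b, hb, h1, h2⟩ | ⟨b, hb, h1, h2⟩
    · exact Or.inl h1.symm
    · right
      rwa [show 2 * a + 1 = z by omega]
    · omega
  have key : ∀ a, a ∈ haltA ↔ (2 * a, 2 * a + 1) ∈ R := by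
    intro a
    constructor
    · intro ha
      have h : (2 * a, 2 * a + 1) ∈ haltE :=
        (mem_haltE _ _).2 (Or.inr (Or.inl ⟨a, ha, rfl, rfl⟩))
      rw [hE] at h
      have h' : Relation.TransGen (fun i j => (i, j) ∈ R) (2 * a) (2 * a + 1) := h
      have : ∀ y, Relation.TransGen (fun i j => (i, j) ∈ R) (2 * a) y →
          y = 2 * a ∨ (2 * a, 2 * a + 1) ∈ R := by
        intro y hy
        induction hy with
        | single h => exact step _ _ h
        | tail _ h ih =>
          rcases ih with rfl | ih
          · exact step _ _ h
          · exact Or.inr ih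
      rcases this _ h' with h | h
      · omega
      · exact h
    · intro h
      have h' := hsub _ _ h
      rw [mem_haltE] at h'
      rcases h' with h1 | ⟨b, hb, h1, h2⟩ | ⟨b, hb, h1, h2⟩
      · omega
      · rwa [show a = b by omega]
      · omega
  apply haltA_not
  refine ComputablePred.computable_of_manyOneReducible ?_ hR
  refine ⟨fun a => (2 * a, 2 * a + 1), ?_, key⟩
  have hd : Primrec fun a : ℕ => 2 * a := Primrec.nat_mul.comp (Primrec.const 2) Primrec.id
  exact (hd.pair (Primrec.succ.comp hd)).to_comp

theorem stmt_5 :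
    ∃ E : Set (ℕ × ℕ), IsEquivRel E ∧ SemiDecidableRel E ∧ FC E ∧
      (¬ ∃ R : Set (ℕ × ℕ), DecidableRelSet R ∧ E = tc R) ∧
      ∃ A : Set ℕ, SemiDecidableSet A ∧ ¬ ComputablePred (fun a => a ∈ A) ∧
        E = {p : ℕ × ℕ | p.1 = p.2 ∨
          (min p.1 p.2 % 2 = 0 ∧ min p.1 p.2 / 2 ∈ A ∧
            max p.1 p.2 = min p.1 p.2 + 1)} := by
  refine ⟨haltE, haltE_equiv, haltE_semi, haltE_fc, haltE_not_tc, haltA, ?_, haltA_not, rfl⟩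
  refine ⟨fun n => haltG n.pred, haltG_comp.comp Computable.pred, ?_⟩
  ext a
  rw [haltG_range]
  constructor
  · rintro ⟨m, rfl⟩
    exact ⟨m + 1, by omega, rfl⟩
  · rintro ⟨n, -, h⟩
    exact ⟨_, h⟩
end

section
/- There is a semi-decidable equivalence relation E on ℕ, with every equivalence class finite (FC), such that: (a) there do not exist n > 1 and decidable equivalence relations H₁, …, Hₙ on ℕ with E equal to the lattice join H₁ ∨ ⋯ ∨ Hₙ (the transitive closure of H₁ ∪ ⋯ ∪ Hₙ); and (b) there do not exist n > 1 and decidable equivalence relations H₁, …, Hₙ on ℕ (not necessarily distinct) with E = H₁ ⋯ Hₙ (their composition). -/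
open Nat.Partrec (Code) in
/-- The halting set on natural-number codes. -/
def KH (i : ℕ) : Prop := ((Denumerable.ofNat Code i).eval 0).Dom

theorem KH_not_comp : ¬ ComputablePred KH := by
  rintro ⟨hd, hc⟩
  apply ComputablePred.halting_problem 0
  refine ⟨fun c => decidable_of_iff (KH (Encodable.encode c)) (by simp [KH]), ?_⟩
  refine (hc.comp Computable.encode).of_eq fun c => ?_
  apply decide_eq_decide.2
  rw [KH, Denumerable.ofNat_encode]

/-- The equivalence relation gluing `2i` and `2i+1` for `i` in the halting set. -/
def EH : Set (ℕ × ℕ) := {p | p.1 = p.2 ∨ (p.1 / 2 = p.2 / 2 ∧ KH (p.1 / 2))}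

open Nat.Partrec (Code) in
/-- Bounded test for `EH`. -/
def tst (q : (ℕ × ℕ) × ℕ) : Prop :=
  q.1.1 = q.1.2 ∨ (q.1.1 / 2 = q.1.2 / 2 ∧
    (Code.evaln q.2 (Denumerable.ofNat Code (q.1.1 / 2)) 0).isSome = true)

theorem tst_prim : PrimrecPred tst := by
  have h1 : Primrec fun q : (ℕ × ℕ) × ℕ => q.1.1 := Primrec.fst.comp Primrec.fst
  have h2 : Primrec fun q : (ℕ × ℕ) × ℕ => q.1.2 := Primrec.snd.comp Primrec.fst
  have h1' := Primrec.nat_div.comp h1 (Primrec.const 2)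
  have h2' := Primrec.nat_div.comp h2 (Primrec.const 2)
  refine (Primrec.eq.comp h1 h2).or ((Primrec.eq.comp h1' h2').and (Primrec.eq.comp ?_ (Primrec.const true)))
  exact Primrec.option_isSome.comp (Nat.Partrec.Code.primrec_evaln.comp
    ((Primrec.snd.pair ((Primrec.ofNat _).comp h1')).pair (Primrec.const 0)))

theorem EH_iff (p : ℕ × ℕ) : p ∈ EH ↔ ∃ k, tst (p, k) := by
  have : KH (p.1 / 2) ↔ ∃ k,
      (Nat.Partrec.Code.evaln k (Denumerable.ofNat Nat.Partrec.Code (p.1 / 2)) 0).isSome = true := by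
    simp only [KH, Part.dom_iff_mem, Nat.Partrec.Code.evaln_complete, Option.isSome_iff_exists,
      Option.mem_def]
    exact exists_comm
  simp only [EH, tst, Set.mem_ofPred_eq, this]
  constructor
  · rintro (h | ⟨h, k, hk⟩)
    · exact ⟨0, Or.inl h⟩
    · exact ⟨k, Or.inr ⟨h, hk⟩⟩
  · rintro ⟨k, h | ⟨h, hk⟩⟩
    · exact Or.inl h
    · exact Or.inr ⟨h, k, hk⟩

theorem EH_semi : SemiDecidableRel EH := by
  obtain ⟨hd, hp⟩ := tst_prim
  let g : (ℕ × ℕ) × ℕ → ℕ × ℕ := fun q => if tst q then q.1 else (0, 0)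
  have hg : Primrec g := Primrec.ite ⟨hd, hp⟩ Primrec.fst (Primrec.const (0, 0))
  refine ⟨fun n => g (Denumerable.ofNat _ n.pred),
    (hg.comp ((Primrec.ofNat _).comp Primrec.pred)).to_comp, ?_⟩
  ext p
  constructor
  · intro h
    obtain ⟨k, hk⟩ := (EH_iff p).1 h
    refine ⟨Encodable.encode (p, k) + 1, by omega, ?_⟩
    change g (Denumerable.ofNat _ (Encodable.encode (p, k))) = p
    rw [Denumerable.ofNat_encode]
    exact if_pos hk
  · rintro ⟨n, -, rfl⟩
    change g (Denumerable.ofNat ((ℕ × ℕ) × ℕ) n.pred) ∈ EH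
    generalize Denumerable.ofNat ((ℕ × ℕ) × ℕ) n.pred = q
    by_cases h : tst q
    · simp only [g, h, if_true]
      exact (EH_iff _).2 ⟨q.2, h⟩
    · simp only [g, h, if_false]
      exact Or.inl rfl

theorem EH_equiv : IsEquivRel EH := by
  refine ⟨fun n => Or.inl rfl, ?_, ?_⟩
  · rintro i j (h | ⟨h, hk⟩)
    · exact Or.inl h.symm
    · simp only at h hk
      exact Or.inr ⟨h.symm, by simpa [← h] using hk⟩
  · rintro i j k (h | ⟨h, hk⟩) (h' | ⟨h', hk'⟩) <;> simp only at h h'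
    · exact Or.inl (h.trans h')
    · subst h; exact Or.inr ⟨h', hk'⟩
    · subst h'; exact Or.inr ⟨h, hk⟩
    · exact Or.inr ⟨h.trans h', hk⟩

theorem EH_FC : FC EH := by
  intro i
  refine (Set.finite_Iic (i + 1)).subset ?_
  rintro j (h | ⟨h, -⟩) <;> simp only [Set.mem_Iic] at * <;> omega

theorem EH_key (U : Set (ℕ × ℕ)) (hU : DecidableRelSet U) (h1 : U ⊆ EH) (h2 : EH ⊆ tc U) :
    False := by
  have key : ∀ i, KH i ↔ (2 * i, 2 * i + 1) ∈ U := by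
    intro i
    constructor
    · intro hi
      have hm : (2 * i, 2 * i + 1) ∈ EH := Or.inr (by
        have e1 : 2 * i / 2 = i := by omega
        have e2 : (2 * i + 1) / 2 = i := by omega
        simp only [e1, e2]
        exact ⟨trivial, hi⟩)
      have ht : Relation.TransGen (fun i j => (i, j) ∈ U) (2 * i) (2 * i + 1) := h2 hm
      have aux : ∀ b, Relation.TransGen (fun i j => (i, j) ∈ U) (2 * i) b →
          b = 2 * i ∨ (2 * i, 2 * i + 1) ∈ U := by
        have step : ∀ c, (2 * i, c) ∈ U → c = 2 * i ∨ (2 * i, 2 * i + 1) ∈ U := by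
          intro c hc
          have : c = 2 * i ∨ c = 2 * i + 1 := by
            rcases h1 hc with h | ⟨h, -⟩ <;> simp only at h <;> omega
          rcases this with h | h
          · exact Or.inl h
          · exact Or.inr (h ▸ hc)
        intro b hb
        induction hb with
        | single h => exact step _ h
        | tail _ h ih =>
          rcases ih with rfl | ih
          · exact step _ h
          · exact Or.inr ih
      rcases aux _ ht with h | h
      · omega
      · exact h
    · intro h
      rcases h1 h with h | ⟨-, h⟩
      · simp only at h; omega
      · have e1 : 2 * i / 2 = i := by omega
        simpa only [e1] using h
  apply KH_not_comp
  obtain ⟨hd, hc⟩ := hU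
  refine ⟨fun i => decidable_of_iff _ (key i).symm, ?_⟩
  have hm : Primrec fun i : ℕ => 2 * i := Primrec.nat_mul.comp (Primrec.const 2) Primrec.id
  refine (hc.comp (hm.pair (Primrec.succ.comp hm)).to_comp).of_eq fun i => ?_
  simp [key]

theorem dec_union {A B : Set (ℕ × ℕ)} (hA : DecidableRelSet A) (hB : DecidableRelSet B) :
    DecidableRelSet (A ∪ B) := by
  obtain ⟨dA, cA⟩ := hA
  obtain ⟨dB, cB⟩ := hB
  refine ⟨fun p => decidable_of_iff (p ∈ A ∨ p ∈ B) Iff.rfl, ?_⟩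
  refine (Primrec.or.to_comp.comp cA cB).of_eq fun p => ?_
  simp

theorem dec_fold (l : List (Set (ℕ × ℕ))) : ∀ H, DecidableRelSet H →
    (∀ K ∈ l, DecidableRelSet K) → DecidableRelSet (l.foldl (· ∪ ·) H) := by
  induction l with
  | nil => intro H h _; exact h
  | cons K l ih =>
    intro H h hl
    exact ih _ (dec_union h (hl K (by simp))) fun K' h' => hl K' (by simp [h'])

theorem comp_sub (l : List (Set (ℕ × ℕ))) : ∀ X U, X ⊆ tc U →
    l.foldl relComp X ⊆ tc (l.foldl (· ∪ ·) U) := by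
  induction l with
  | nil => intro X U h; exact h
  | cons K l ih =>
    intro X U h
    refine ih _ _ ?_
    rintro ⟨a, b⟩ ⟨j, h1, h2⟩
    have h3 : Relation.TransGen (fun i j => (i, j) ∈ U) a j := h h1
    have h4 : Relation.TransGen (fun i j => (i, j) ∈ U ∪ K) a j :=
      Relation.TransGen.mono (fun _ _ h => Or.inl h) _ _ h3
    exact Relation.TransGen.tail h4 (Or.inr h2)

theorem sub_comp (l : List (Set (ℕ × ℕ))) : ∀ X U : Set (ℕ × ℕ), U ⊆ X → (∀ n, (n, n) ∈ X) →
    (∀ K ∈ l, ∀ n, (n, n) ∈ K) → l.foldl (· ∪ ·) U ⊆ l.foldl relComp X := by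
  induction l with
  | nil => intro X U h _ _; exact h
  | cons K l ih =>
    intro X U h hX hl
    have hK := hl K (by simp)
    refine ih _ _ ?_ (fun n => ⟨n, hX n, hK n⟩) fun K' h' => hl K' (by simp [h'])
    rintro ⟨a, b⟩ (h' | h')
    · exact ⟨b, h h', hK b⟩
    · exact ⟨a, hX a, h'⟩

theorem stmt_6 :
    ∃ E : Set (ℕ × ℕ), IsEquivRel E ∧ SemiDecidableRel E ∧ FC E ∧
      (¬ ∃ (H : Set (ℕ × ℕ)) (l : List (Set (ℕ × ℕ))), l ≠ [] ∧
        (IsEquivRel H ∧ DecidableRelSet H) ∧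
        (∀ K ∈ l, IsEquivRel K ∧ DecidableRelSet K) ∧
        E = tc (l.foldl (· ∪ ·) H)) ∧
      (¬ ∃ (H : Set (ℕ × ℕ)) (l : List (Set (ℕ × ℕ))), l ≠ [] ∧
        (IsEquivRel H ∧ DecidableRelSet H) ∧
        (∀ K ∈ l, IsEquivRel K ∧ DecidableRelSet K) ∧
        E = l.foldl relComp H) := by
  refine ⟨EH, EH_equiv, EH_semi, EH_FC, ?_, ?_⟩
  · rintro ⟨H, l, -, hH, hl, hE⟩
    refine EH_key _ (dec_fold l H hH.2 fun K hK => (hl K hK).2) ?_ hE.subset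
    rw [hE]
    exact fun p hp => Relation.TransGen.single hp
  · rintro ⟨H, l, -, hH, hl, hE⟩
    refine EH_key _ (dec_fold l H hH.2 fun K hK => (hl K hK).2) ?_ ?_
    · rw [hE]
      exact sub_comp l H H subset_rfl hH.1.1 fun K hK => (hl K hK).1.1
    · rw [hE]
      exact comp_sub l H H fun p hp => Relation.TransGen.single hp
end

section
/- If some enumeration ν of an equivalence relation E on ℕ has a coding ξ, then for every i ∈ ℕ₊ the set {n | π₁(π(n)) = i} is infinite (where π = ν∘ξ), and every equivalence class of E is infinite. Specifically, if ν(k) = (i,i), then {π(ξⁿ(k)) | n ∈ ℕ} = {i} × {π₂(π(ξⁿ(k))) | n ∈ ℕ} is an infinite subset of E. -/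
theorem stmt_10 (E : Set (ℕ × ℕ)) (ν : ℕ → ℕ × ℕ) (ξ : ℕ → ℕ)
    (hE : IsEquivRel E) (hν : IsEnumeration ν E) (hξ : IsCoding ν ξ) :
    (∀ i, 1 ≤ i → {n | 1 ≤ n ∧ (ν (ξ n)).1 = i}.Infinite) ∧
    IC E ∧
    (∀ k, 1 ≤ k → ∀ i, ν k = (i, i) →
      {e | ∃ n : ℕ, ν (ξ (ξ^[n] k)) = e} =
        ({i} : Set ℕ) ×ˢ {j | ∃ n : ℕ, (ν (ξ (ξ^[n] k))).2 = j} ∧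
      {e | ∃ n : ℕ, ν (ξ (ξ^[n] k)) = e}.Infinite ∧
      {e | ∃ n : ℕ, ν (ξ (ξ^[n] k)) = e} ⊆ E) := by
  obtain ⟨-, hR⟩ := hν
  obtain ⟨-, h1, h2, h3, h4⟩ := hξ
  have hlt : ∀ n, 1 ≤ n → n < ξ n := by
    intro n hn
    induction n, hn using Nat.le_induction with
    | base => exact h1
    | succ n hn ih => have := (h4 n hn).1; omega
  have hfst : ∀ n, 1 ≤ n → (ν (ξ n)).1 = (ν n).1 := by
    intro n hn
    obtain ⟨m, rfl⟩ := Nat.exists_eq_add_of_le' hn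
    rcases Nat.eq_zero_or_pos m with rfl | hm
    · exact h2
    · exact (h4 m hm).2.1
  have hmono : ∀ m, 1 ≤ m → ∀ n, m < n → (ν (ξ m)).2 < (ν (ξ n)).2 := by
    intro m hm n hn
    have hstep : ∀ n, 1 ≤ n → (ν (ξ n)).2 < (ν (ξ (n+1))).2 := fun n hn =>
      lt_of_le_of_lt (le_max_right _ _) (h4 n hn).2.2
    induction n, hn using Nat.le_induction with
    | base => exact hstep m hm
    | succ n hn ih => exact ih.trans (hstep n (by omega))
  have hpos : ∀ k, 1 ≤ k → ∀ n, 1 ≤ ξ^[n] k := by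
    intro k hk n
    induction n with
    | zero => exact hk
    | succ n ih =>
      rw [Function.iterate_succ_apply']
      have := hlt _ ih
      omega
  have hsm : ∀ k, 1 ≤ k → StrictMono (fun n => ξ^[n] k) := by
    intro k hk
    refine strictMono_nat_of_lt_succ fun n => ?_
    simp only [Function.iterate_succ_apply']
    exact hlt _ (hpos k hk n)
  have hf : ∀ k, 1 ≤ k → ∀ n, (ν (ξ (ξ^[n] k))).1 = (ν k).1 := by
    intro k hk n
    induction n with
    | zero => exact hfst k hk
    | succ n ih =>
      rw [hfst _ (hpos k hk _), Function.iterate_succ_apply', ih]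
  have hs : ∀ k, 1 ≤ k → StrictMono (fun n => (ν (ξ (ξ^[n] k))).2) := by
    intro k hk a b hab
    exact hmono _ (hpos k hk a) _ (hsm k hk hab)
  have hmem : ∀ k, 1 ≤ k → ∀ n, ν (ξ (ξ^[n] k)) ∈ E := by
    intro k hk n
    rw [hR]
    have := hlt _ (hpos k hk n)
    exact ⟨_, by omega, rfl⟩
  have hex : ∀ i, ∃ k, 1 ≤ k ∧ ν k = (i, i) := by
    intro i
    have := hE.1 i
    rw [hR] at this
    exact this
  refine ⟨?_, ?_, ?_⟩
  · intro i _
    obtain ⟨k, hk, hki⟩ := hex i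
    refine Set.infinite_of_injective_forall_mem (hsm k hk).injective fun n => ?_
    exact ⟨hpos k hk n, by rw [hf k hk n, hki]⟩
  · intro i
    obtain ⟨k, hk, hki⟩ := hex i
    refine Set.infinite_of_injective_forall_mem (hs k hk).injective fun n => ?_
    have h := hmem k hk n
    have h' := hf k hk n
    rw [hki] at h'
    have e : ν (ξ (ξ^[n] k)) = (i, (ν (ξ (ξ^[n] k))).2) := Prod.ext h' rfl
    rw [e] at h
    exact h
  · intro k hk i hki
    have h' : ∀ n, (ν (ξ (ξ^[n] k))).1 = i := fun n => by rw [hf k hk n, hki]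
    refine ⟨?_, ?_, ?_⟩
    · ext ⟨a, b⟩
      constructor
      · rintro ⟨n, hn⟩
        have := h' n
        rw [hn] at this
        exact ⟨this, n, by rw [hn]⟩
      · rintro ⟨ha, n, hn⟩
        exact ⟨n, Prod.ext ((h' n).trans ha.symm) hn⟩
    · refine Set.infinite_of_injective_forall_mem
        (f := fun n => ν (ξ (ξ^[n] k))) ?_ fun n => ⟨n, rfl⟩
      intro a b hab
      exact (hs k hk).injective (congrArg Prod.snd hab)
    · rintro e ⟨n, rfl⟩
      exact hmem k hk n
end

section
/- If E is an equivalence relation on ℕ in which every equivalence class is infinite, and ν is an enumeration of E, then there exists a coding ξ of ν. -/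
theorem aux_ex (E : Set (ℕ × ℕ)) (ν : ℕ → ℕ × ℕ) (hIC : IC E) (hν : IsEnumeration ν E)
    (i p b : ℕ) : ∃ k, p < k ∧ (ν k).1 = i ∧ b < (ν k).2 := by
  have hfin : ((Finset.range (b+1) ∪ (Finset.range (p+1)).image (fun k => (ν k).2) : Finset ℕ) : Set ℕ).Finite :=
    Finset.finite_toSet _
  obtain ⟨j, hj, hj'⟩ := ((hIC i).sdiff hfin).nonempty
  rw [Set.mem_ofPred_eq, hν.2] at hj
  obtain ⟨k, -, hk⟩ := hj
  simp only [Finset.coe_union, Set.mem_union, Finset.mem_coe, Finset.mem_range, Finset.mem_image, not_or, not_exists, not_and] at hj'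
  refine ⟨k, ?_, by rw [hk], by rw [hk]; have := hj'.1; simp; omega⟩
  by_contra h
  exact hj'.2 k (by omega) (by rw [hk])

theorem stmt_11 (E : Set (ℕ × ℕ)) (ν : ℕ → ℕ × ℕ) (hE : IsEquivRel E)
    (hIC : IC E) (hν : IsEnumeration ν E) :
    ∃ ξ : ℕ → ℕ, IsCoding ν ξ := by
  have hc := hν.1
  have hex : ∀ q : ℕ × ℕ, ∃ k, q.2 < k ∧ (ν k).1 = (ν q.1).1 ∧
      max (max 1 (ν q.1).1) (ν q.2).2 < (ν k).2 := fun q => aux_ex E ν hIC hν _ _ _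
  let f : ℕ × ℕ → ℕ → Bool := fun q k => decide (q.2 < k) && (decide ((ν k).1 = (ν q.1).1) &&
      (decide (1 < (ν k).2) && (decide ((ν q.1).1 < (ν k).2) && decide ((ν q.2).2 < (ν k).2))))
  have hf : Computable₂ f := by
    have hlt : Computable₂ (fun a b : ℕ => decide (a < b)) := Primrec.nat_lt.decide.to_comp
    have heq : Computable₂ (fun a b : ℕ => decide (a = b)) := Primrec.eq.decide.to_comp
    have hand : Computable₂ and := Primrec.and.to_comp
    have hk : Computable (fun x : (ℕ × ℕ) × ℕ => ν x.2) := hc.comp Computable.snd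
    have h1 : Computable (fun x : (ℕ × ℕ) × ℕ => ν x.1.1) :=
      hc.comp (Computable.fst.comp Computable.fst)
    have h2 : Computable (fun x : (ℕ × ℕ) × ℕ => ν x.1.2) :=
      hc.comp (Computable.snd.comp Computable.fst)
    have hk2 := Computable.snd.comp hk
    exact hand.comp (hlt.comp (Computable.snd.comp Computable.fst) Computable.snd)
      (hand.comp (heq.comp (Computable.fst.comp hk) (Computable.fst.comp h1))
      (hand.comp (hlt.comp (Computable.const 1) hk2)
      (hand.comp (hlt.comp (Computable.fst.comp h1) hk2) (hlt.comp (Computable.snd.comp h2) hk2))))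
  have hr : Partrec (fun q : ℕ × ℕ => Nat.rfind (PFun.lift (f q))) :=
    Partrec.rfind hf.partrec₂
  have hg : ∀ q : ℕ × ℕ, ∃ k, k ∈ Nat.rfind (PFun.lift (f q)) := by
    intro q
    obtain ⟨k, h⟩ := hex q
    simp only [max_lt_iff] at h
    have hk : f q k = true := by simp [f, h]
    obtain ⟨n, hn, -⟩ := Nat.rfind_min' hk
    exact ⟨n, hn⟩
  choose g hg using hg
  have hgc : Computable g := hr.of_eq_tot hg
  have hgs : ∀ q : ℕ × ℕ, q.2 < g q ∧ (ν (g q)).1 = (ν q.1).1 ∧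
      1 < (ν (g q)).2 ∧ (ν q.1).1 < (ν (g q)).2 ∧ (ν q.2).2 < (ν (g q)).2 := by
    intro q
    have := Nat.rfind_spec (hg q)
    simpa [f] using this
  let ξ : ℕ → ℕ := fun n => Nat.rec 1 (fun m p => g (m + 1, p)) n
  have hξ : ∀ n, ξ (n+1) = g (n+1, ξ n) := fun n => rfl
  refine ⟨ξ, ?_, ?_⟩
  · refine Computable.nat_rec (f := fun n : ℕ => n) (g := fun _ => 1)
      (h := fun _ x => g (x.1 + 1, x.2)) Computable.id (Computable.const 1) ?_
    exact hgc.comp (Computable.pair (Computable.succ.comp (Computable.fst.comp Computable.snd))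
      (Computable.snd.comp Computable.snd))
  · have h := fun n => hgs (n+1, ξ n)
    simp only [← hξ] at h
    have h0 := h 0
    refine ⟨h0.1, h0.2.1, max_lt h0.2.2.1 h0.2.2.2.1, fun n _ => ⟨(h n).1, (h n).2.1, ?_⟩⟩
    exact max_lt ((h n).2.1 ▸ (h n).2.2.2.1) (h n).2.2.2.2
end

section
/- If ξ is a coding of an enumeration ν, then the relations R_ξ and S_ξ are decidable. -/
theorem cpEq {α β : Type} [Primcodable α] [Primcodable β] [DecidableEq β] {f g : α → β}
    (hf : Computable f) (hg : Computable g) : ComputablePred (fun a => f a = g a) :=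
  ⟨fun _ => inferInstance, (Primrec.eq (α := β)).decide.to_comp.comp hf hg⟩

theorem cpAnd {α : Type} [Primcodable α] {p q : α → Prop}
    (hp : ComputablePred p) (hq : ComputablePred q) : ComputablePred (fun a => p a ∧ q a) := by
  obtain ⟨f, hf, rfl⟩ := ComputablePred.computable_iff.1 hp
  obtain ⟨g, hg, rfl⟩ := ComputablePred.computable_iff.1 hq
  refine ComputablePred.computable_iff.2 ⟨fun a => f a && g a, Primrec.and.to_comp.comp hf hg, ?_⟩
  funext a
  simp

theorem cpEx {α : Type} [Primcodable α] {p : α × ℕ → Prop} {N : α → ℕ}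
    (hp : ComputablePred p) (hN : Computable N) :
    ComputablePred (fun a => ∃ k, k < N a ∧ p (a, k)) := by
  obtain ⟨f, hf, rfl⟩ := ComputablePred.computable_iff.1 hp
  have key : Computable fun a => Nat.rec (motive := fun _ => Bool) false
      (fun y IH => (fun (a : α) (z : ℕ × Bool) => z.2 || f (a, z.1)) a (y, IH)) (N a) := by
    refine Computable.nat_rec (h := fun (a : α) (z : ℕ × Bool) => z.2 || f (a, z.1))
      hN (Computable.const false) ?_
    exact Primrec.or.to_comp.comp (Computable.snd.comp Computable.snd)
      (hf.comp (Computable.pair Computable.fst (Computable.fst.comp Computable.snd)))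
  refine ComputablePred.computable_iff.2 ⟨_, key, ?_⟩
  funext a
  simp only [eq_iff_iff]
  induction N a with
  | zero => simp
  | succ n ih =>
    simp only [Bool.or_eq_true]
    rw [← ih]
    constructor
    · rintro ⟨k, hk, h⟩
      rcases Nat.lt_succ_iff_lt_or_eq.1 hk with h' | rfl
      · exact Or.inl ⟨k, h', h⟩
      · exact Or.inr h
    · rintro (⟨k, hk, h⟩ | h)
      · exact ⟨k, by omega, h⟩
      · exact ⟨n, by omega, h⟩

theorem coding_lt {ν : ℕ → ℕ × ℕ} {ξ : ℕ → ℕ} (hξ : IsCoding ν ξ) (k : ℕ) :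
    k + 1 < (ν (ξ (k + 1))).2 := by
  obtain ⟨-, -, -, h1, h⟩ := hξ
  induction k with
  | zero => exact lt_of_le_of_lt (le_max_left _ _) h1
  | succ k ih =>
    have := lt_of_le_of_lt (le_max_right _ _) (h (k + 1) (by omega)).2.2
    omega

theorem stmt_12 (ν : ℕ → ℕ × ℕ) (ξ : ℕ → ℕ) (hν : Computable ν)
    (hξ : IsCoding ν ξ) :
    DecidableRelSet (Rcod ν ξ) ∧ DecidableRelSet (Scod ν ξ) := by
  have hx : Computable ξ := hξ.1
  have hlt := coding_lt hξ
  constructor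
  · have h : ComputablePred (fun p : ℕ × ℕ => ∃ k, k < p.2 ∧ ν (ξ (k + 1)) = p) :=
      cpEx (p := fun x : (ℕ × ℕ) × ℕ => ν (ξ (x.2 + 1)) = x.1)
        (cpEq (hν.comp (hx.comp (Computable.succ.comp Computable.snd))) Computable.fst)
        Computable.snd
    refine h.of_eq ?_
    intro p
    constructor
    · rintro ⟨k, -, h⟩
      exact ⟨k + 1, by omega, h⟩
    · rintro ⟨n, hn, rfl⟩
      obtain ⟨k, rfl⟩ : ∃ k, n = k + 1 := ⟨n - 1, by omega⟩
      have := hlt k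
      exact ⟨k, by omega, rfl⟩
  · have hm : Computable (fun x : ((ℕ × ℕ) × ℕ) × ℕ => x.1.2 + 1) :=
      Computable.succ.comp (Computable.snd.comp Computable.fst)
    have hn : Computable (fun x : ((ℕ × ℕ) × ℕ) × ℕ => x.2 + 1) :=
      Computable.succ.comp Computable.snd
    have hb : ComputablePred (fun x : ((ℕ × ℕ) × ℕ) × ℕ =>
        ν (x.2 + 1) = ((ν (x.1.2 + 1)).2, (ν (x.1.2 + 1)).1) ∧
          x.1.1 = ((ν (ξ (x.1.2 + 1))).2, (ν (ξ (x.2 + 1))).2)) :=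
      cpAnd
        (cpEq (hν.comp hn) (Computable.pair (Computable.snd.comp (hν.comp hm))
          (Computable.fst.comp (hν.comp hm))))
        (cpEq (Computable.fst.comp Computable.fst)
          (Computable.pair (Computable.snd.comp (hν.comp (hx.comp hm)))
            (Computable.snd.comp (hν.comp (hx.comp hn)))))
    have h := cpEx (cpEx hb (N := fun y => y.1.2) (Computable.snd.comp Computable.fst))
      (N := fun y => y.1) Computable.fst
    refine h.of_eq ?_
    intro p
    constructor
    · rintro ⟨m, -, n, -, h1, h2⟩
      exact ⟨m + 1, by omega, n + 1, by omega, h1, h2⟩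
    · rintro ⟨m, hm, n, hn, h1, rfl⟩
      obtain ⟨k, rfl⟩ : ∃ k, m = k + 1 := ⟨m - 1, by omega⟩
      obtain ⟨l, rfl⟩ : ∃ l, n = l + 1 := ⟨n - 1, by omega⟩
      have := hlt k
      have := hlt l
      exact ⟨k, by dsimp only; omega, l, by dsimp only; omega, h1, rfl⟩
end

section
/- If ξ is a coding of ν, an enumeration of an equivalence relation E on ℕ in which every equivalence class is infinite, then: T_ξ is decidable and T_ξ ⊆ E; S_ξ ∪ T_ξ is symmetric and transitive; S_ξ ∪ T_ξ ∪ I ⊆ E is an equivalence relation; and both S_ξ ∪ T_ξ and S_ξ ∪ T_ξ ∪ I are decidable relations. -/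
theorem aux_f_lt {ν : ℕ → ℕ × ℕ} {ξ : ℕ → ℕ} (hξ : IsCoding ν ξ) :
    ∀ n, 1 ≤ n → n < (ν (ξ n)).2 := by
  obtain ⟨-, -, -, h1, h⟩ := hξ
  intro n hn
  induction n, hn using Nat.le_induction with
  | base => exact lt_of_le_of_lt (le_max_left _ _) h1
  | succ n hn ih =>
    have := (h n hn).2.2
    have := lt_of_le_of_lt (le_max_right _ _) this
    omega

theorem aux_mono {ν : ℕ → ℕ × ℕ} {ξ : ℕ → ℕ} (hξ : IsCoding ν ξ) (m : ℕ) (hm : 1 ≤ m) :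
    ∀ n, m + 1 ≤ n → (ν (ξ m)).2 < (ν (ξ n)).2 := by
  obtain ⟨-, -, -, h1, h⟩ := hξ
  intro n hn
  induction n, hn using Nat.le_induction with
  | base => exact lt_of_le_of_lt (le_max_right _ _) (h m hm).2.2
  | succ n hn ih =>
    have := (h n (by omega)).2.2
    have := lt_of_le_of_lt (le_max_right _ _) this
    omega

theorem aux_inj {ν : ℕ → ℕ × ℕ} {ξ : ℕ → ℕ} (hξ : IsCoding ν ξ) {m n : ℕ} (hm : 1 ≤ m)
    (hn : 1 ≤ n) (h : (ν (ξ m)).2 = (ν (ξ n)).2) : m = n := by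
  rcases lt_trichotomy m n with h' | h' | h'
  · have := aux_mono hξ m hm n h'
    omega
  · exact h'
  · have := aux_mono hξ n hn m h'
    omega

theorem aux_first {ν : ℕ → ℕ × ℕ} {ξ : ℕ → ℕ} (hξ : IsCoding ν ξ) (n : ℕ) (hn : 1 ≤ n) :
    (ν (ξ n)).1 = (ν n).1 ∧ 1 ≤ ξ n := by
  obtain ⟨-, h0, h2, h1, h⟩ := hξ
  rcases n with _ | _ | n
  · omega
  · exact ⟨h2, h0.le⟩
  · have := h (n + 1) (by omega)
    exact ⟨this.2.1, by omega⟩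

/-- bounded search for the index -/
def auxG (f : ℕ → ℕ) (a : ℕ) (n : ℕ) : ℕ :=
  Nat.rec 0 (fun k ih => bif decide (f (k + 1) = a) then k + 1 else ih) n

theorem auxG_comp {f : ℕ → ℕ} (hf : Computable f) : Computable (fun a => auxG f a a) := by
  unfold auxG
  refine Computable.nat_rec (f := fun a : ℕ => a) (g := fun _ => 0)
    (h := fun a p => bif decide (f (p.1 + 1) = a) then p.1 + 1 else p.2)
    Computable.id (Computable.const 0) ?_
  have hk : Computable (fun p : ℕ × ℕ × ℕ => p.2.1 + 1) :=
    Computable.succ.comp (Computable.fst.comp Computable.snd)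
  refine Computable.cond ?_ hk (Computable.snd.comp Computable.snd)
  exact (Primrec.eq (α := ℕ)).decide.to_comp.comp (hf.comp hk) Computable.fst

theorem auxG_spec (f : ℕ → ℕ) (a n : ℕ) (h : 1 ≤ auxG f a n) : f (auxG f a n) = a := by
  induction n with
  | zero => simp [auxG] at h
  | succ n ih =>
    have e : auxG f a (n + 1) = bif decide (f (n + 1) = a) then n + 1 else auxG f a n := rfl
    by_cases h' : f (n + 1) = a
    · simp [e, h']
    · simp only [e, h', decide_false, cond_false] at h ⊢
      exact ih h

theorem auxG_pos (f : ℕ → ℕ) (a n m : ℕ) (hm : 1 ≤ m) (hmn : m ≤ n) (h : f m = a) :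
    1 ≤ auxG f a n := by
  induction n with
  | zero => omega
  | succ n ih =>
    have e : auxG f a (n + 1) = bif decide (f (n + 1) = a) then n + 1 else auxG f a n := rfl
    by_cases h' : f (n + 1) = a
    · simp [e, h']
    · simp only [e, h', decide_false, cond_false]
      apply ih
      rcases Nat.lt_or_ge n m with h'' | h''
      · exact absurd ((by omega : m = n + 1) ▸ h) h'
      · exact h''

/-- the index of a code -/
def auxI (ν : ℕ → ℕ × ℕ) (ξ : ℕ → ℕ) (a : ℕ) : ℕ := auxG (fun n => (ν (ξ n)).2) a a

theorem auxI_spec {ν : ℕ → ℕ × ℕ} {ξ : ℕ → ℕ} (a : ℕ) (h : 1 ≤ auxI ν ξ a) :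
    (ν (ξ (auxI ν ξ a))).2 = a := auxG_spec (fun n => (ν (ξ n)).2) a a h

theorem auxI_eq {ν : ℕ → ℕ × ℕ} {ξ : ℕ → ℕ} (hξ : IsCoding ν ξ) (m : ℕ) (hm : 1 ≤ m) :
    auxI ν ξ (ν (ξ m)).2 = m := by
  have h1 : 1 ≤ auxI ν ξ (ν (ξ m)).2 :=
    auxG_pos (fun n => (ν (ξ n)).2) _ _ m hm (aux_f_lt hξ m hm).le rfl
  exact aux_inj hξ h1 hm (auxI_spec _ h1)

theorem auxI_comp {ν : ℕ → ℕ × ℕ} {ξ : ℕ → ℕ} (hν : Computable ν) (hξ : Computable ξ) :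
    Computable (auxI ν ξ) :=
  auxG_comp (Computable.snd.comp (hν.comp hξ))

theorem memT {ν : ℕ → ℕ × ℕ} {ξ : ℕ → ℕ} (hξ : IsCoding ν ξ) (p : ℕ × ℕ) :
    p ∈ Tcod ν ξ ↔ 1 ≤ auxI ν ξ p.1 ∧ 1 ≤ auxI ν ξ p.2 ∧
      ν (auxI ν ξ p.2) = ν (auxI ν ξ p.1) := by
  constructor
  · rintro ⟨m, hm, n, hn, h, rfl⟩
    simp only [auxI_eq hξ m hm, auxI_eq hξ n hn]
    exact ⟨hm, hn, h⟩
  · rintro ⟨h1, h2, h⟩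
    exact ⟨_, h1, _, h2, h, by rw [auxI_spec _ h1, auxI_spec _ h2]⟩

theorem memS {ν : ℕ → ℕ × ℕ} {ξ : ℕ → ℕ} (hξ : IsCoding ν ξ) (p : ℕ × ℕ) :
    p ∈ Scod ν ξ ↔ 1 ≤ auxI ν ξ p.1 ∧ 1 ≤ auxI ν ξ p.2 ∧
      ν (auxI ν ξ p.2) = (ν (auxI ν ξ p.1)).swap := by
  constructor
  · rintro ⟨m, hm, n, hn, h, rfl⟩
    simp only [auxI_eq hξ m hm, auxI_eq hξ n hn]
    exact ⟨hm, hn, h⟩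
  · rintro ⟨h1, h2, h⟩
    exact ⟨_, h1, _, h2, h, by rw [auxI_spec _ h1, auxI_spec _ h2]⟩

theorem cp_and {p q : ℕ × ℕ → Prop} (hp : ComputablePred p) (hq : ComputablePred q) :
    ComputablePred fun x => p x ∧ q x := by
  obtain ⟨f, hf, rfl⟩ := ComputablePred.computable_iff.1 hp
  obtain ⟨g, hg, rfl⟩ := ComputablePred.computable_iff.1 hq
  refine ComputablePred.computable_iff.2 ⟨fun x => f x && g x, ?_, by funext x; simp⟩
  exact Primrec.and.to_comp.comp hf hg

theorem cp_or {p q : ℕ × ℕ → Prop} (hp : ComputablePred p) (hq : ComputablePred q) :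
    ComputablePred fun x => p x ∨ q x := by
  obtain ⟨f, hf, rfl⟩ := ComputablePred.computable_iff.1 hp
  obtain ⟨g, hg, rfl⟩ := ComputablePred.computable_iff.1 hq
  refine ComputablePred.computable_iff.2 ⟨fun x => f x || g x, ?_, by funext x; simp⟩
  exact Primrec.or.to_comp.comp hf hg

theorem cp_eq {β : Type} [Primcodable β] [DecidableEq β] {f g : ℕ × ℕ → β}
    (hf : Computable f) (hg : Computable g) : ComputablePred fun x => f x = g x :=
  ComputablePred.computable_iff.2 ⟨fun x => decide (f x = g x),
    (Primrec.eq (α := β)).decide.to_comp.comp hf hg, by funext x; simp⟩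

theorem cp_pos {f : ℕ × ℕ → ℕ} (hf : Computable f) : ComputablePred fun x => 1 ≤ f x :=
  ComputablePred.computable_iff.2 ⟨fun x => decide (1 ≤ f x),
    Primrec.nat_le.decide.to_comp.comp (Computable.const 1) hf, by funext x; simp⟩

theorem stmt_14 (E : Set (ℕ × ℕ)) (ν : ℕ → ℕ × ℕ) (ξ : ℕ → ℕ)
    (hE : IsEquivRel E) (hIC : IC E) (hν : IsEnumeration ν E)
    (hξ : IsCoding ν ξ) :
    DecidableRelSet (Tcod ν ξ) ∧ Tcod ν ξ ⊆ E ∧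
    IsSymRel (Scod ν ξ ∪ Tcod ν ξ) ∧ IsTransRel (Scod ν ξ ∪ Tcod ν ξ) ∧
    Scod ν ξ ∪ Tcod ν ξ ∪ diagRel ⊆ E ∧
    IsEquivRel (Scod ν ξ ∪ Tcod ν ξ ∪ diagRel) ∧
    DecidableRelSet (Scod ν ξ ∪ Tcod ν ξ) ∧
    DecidableRelSet (Scod ν ξ ∪ Tcod ν ξ ∪ diagRel) := by
  obtain ⟨hr, hs, ht⟩ := hE
  obtain ⟨hνc, hνE⟩ := hν
  have hmem : ∀ n, 1 ≤ n → ν n ∈ E := fun n hn => by rw [hνE]; exact ⟨n, hn, rfl⟩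
  have hI1 : Computable fun p : ℕ × ℕ => auxI ν ξ p.1 :=
    (auxI_comp hνc hξ.1).comp Computable.fst
  have hI2 : Computable fun p : ℕ × ℕ => auxI ν ξ p.2 :=
    (auxI_comp hνc hξ.1).comp Computable.snd
  have hTd : DecidableRelSet (Tcod ν ξ) := by
    unfold DecidableRelSet
    simp only [memT hξ]
    exact cp_and (cp_pos hI1) (cp_and (cp_pos hI2) (cp_eq (hνc.comp hI2) (hνc.comp hI1)))
  have hSd : DecidableRelSet (Scod ν ξ) := by
    unfold DecidableRelSet
    simp only [memS hξ]
    exact cp_and (cp_pos hI1) (cp_and (cp_pos hI2) (cp_eq (hνc.comp hI2)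
      (((Computable.snd.comp (hνc.comp hI1)).pair (Computable.fst.comp (hνc.comp hI1))))))
  have hSTd : DecidableRelSet (Scod ν ξ ∪ Tcod ν ξ) := cp_or hSd hTd
  have hST : ∀ i j, (i, j) ∈ Scod ν ξ ∪ Tcod ν ξ ↔ 1 ≤ auxI ν ξ i ∧ 1 ≤ auxI ν ξ j ∧
      (ν (auxI ν ξ j) = (ν (auxI ν ξ i)).swap ∨ ν (auxI ν ξ j) = ν (auxI ν ξ i)) := by
    intro i j
    rw [Set.mem_union, memS hξ, memT hξ]
    tauto
  have hcls : ∀ n, 1 ≤ n → ((ν n).1, (ν (ξ n)).2) ∈ E := fun n hn => by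
    obtain ⟨h1, h2⟩ := aux_first hξ n hn
    rw [← h1]
    exact hmem _ h2
  have hTE : Tcod ν ξ ⊆ E := by
    rintro _ ⟨m, hm, n, hn, h, rfl⟩
    exact ht (hs (hcls m hm)) (h ▸ hcls n hn)
  have hSE : Scod ν ξ ⊆ E := by
    rintro _ ⟨m, hm, n, hn, h, rfl⟩
    have h3 := hcls n hn
    rw [h] at h3
    exact ht (hs (hcls m hm)) (ht (hmem m hm) h3)
  have hsym : IsSymRel (Scod ν ξ ∪ Tcod ν ξ) := by
    intro i j h
    rw [hST] at h ⊢
    obtain ⟨h1, h2, h⟩ := h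
    refine ⟨h2, h1, ?_⟩
    rcases h with h | h
    · left; rw [h, Prod.swap_swap]
    · right; exact h.symm
  have htr : IsTransRel (Scod ν ξ ∪ Tcod ν ξ) := by
    intro i j k h h'
    rw [hST] at h h' ⊢
    obtain ⟨h1, h2, h⟩ := h
    obtain ⟨h3, h4, h'⟩ := h'
    refine ⟨h1, h4, ?_⟩
    rcases h with h | h <;> rcases h' with h' | h' <;> rw [h', h] <;> simp
  refine ⟨hTd, hTE, hsym, htr, ?_, ⟨?_, ?_, ?_⟩, hSTd, ?_⟩
  · rintro ⟨i, j⟩ ((h | h) | h)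
    · exact hSE h
    · exact hTE h
    · obtain rfl : i = j := h
      exact hr i
  · exact fun n => Or.inr rfl
  · rintro i j (h | h)
    · exact Or.inl (hsym h)
    · exact Or.inr (Eq.symm h)
  · rintro i j k (h | h) h'
    · rcases h' with h' | h'
      · exact Or.inl (htr h h')
      · obtain rfl : j = k := h'
        exact Or.inl h
    · obtain rfl : i = j := h
      exact h'
  · exact cp_or hSTd (cp_eq Computable.fst Computable.snd)
end

section
/- If ξ is a coding of ν, an enumeration of an equivalence relation E on ℕ in which every equivalence class is infinite, then the transitive closure of R_ξ ∪ R_ξ⁻¹ is a decidable equivalence relation on ℕ in which every equivalence class is infinite. -/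
/-- Parent function of the forest whose edges are the values of `f`. -/
def parStep (f : ℕ → ℕ × ℕ) (j m : ℕ) : ℕ :=
  Nat.rec (motive := fun _ => ℕ) j
    (fun n acc => bif (f n).2 == j then (f n).1 else acc) m

/-- Parent function. -/
def par (f : ℕ → ℕ × ℕ) (j : ℕ) : ℕ := parStep f j j

/-- Root function. -/
def rootIter (f : ℕ → ℕ × ℕ) (j k : ℕ) : ℕ :=
  Nat.rec (motive := fun _ => ℕ) j (fun _ acc => par f acc) k

theorem par_computable {f : ℕ → ℕ × ℕ} (hf : Computable f) : Computable (par f) := by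
  have h1 : Computable (fun q : ℕ × (ℕ × ℕ) => f q.2.1) :=
    hf.comp (Computable.fst.comp Computable.snd)
  have h2 : Computable₂ (fun (j : ℕ) (q : ℕ × ℕ) =>
      bif (f q.1).2 == j then (f q.1).1 else q.2) := by
    refine Computable.cond ?_ (Computable.fst.comp h1) (Computable.snd.comp Computable.snd)
    exact (Primrec.beq (α := ℕ)).to_comp.comp (Computable.snd.comp h1) Computable.fst
  exact Computable.nat_rec Computable.id Computable.id h2

theorem root_computable {f : ℕ → ℕ × ℕ} (hf : Computable f) :
    Computable (fun j => rootIter f j j) := by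
  have h2 : Computable₂ (fun (_ : ℕ) (q : ℕ × ℕ) => par f q.2) :=
    (par_computable hf).comp (Computable.snd.comp Computable.snd)
  exact Computable.nat_rec Computable.id Computable.id h2

theorem parStep_or (f : ℕ → ℕ × ℕ) (j m : ℕ) :
    parStep f j m = j ∨ ∃ n, f n = (parStep f j m, j) := by
  induction m with
  | zero => left; rfl
  | succ m ih =>
    have e : parStep f j (m+1) = bif (f m).2 == j then (f m).1 else parStep f j m := rfl
    by_cases h : (f m).2 = j
    · right
      refine ⟨m, ?_⟩
      rw [e]; simp [h, Prod.ext_iff]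
    · have hb : ((f m).2 == j) = false := beq_false_of_ne h
      rw [e, hb]; exact ih

theorem parStep_eq {f : ℕ → ℕ × ℕ} (hm : StrictMono fun n => (f n).2) (n m : ℕ) (h : n < m) :
    parStep f (f n).2 m = (f n).1 := by
  induction m with
  | zero => omega
  | succ m ih =>
    have e : parStep f (f n).2 (m+1) =
      bif (f m).2 == (f n).2 then (f m).1 else parStep f (f n).2 m := rfl
    rw [e]
    by_cases hc : (f m).2 = (f n).2
    · have : m = n := hm.injective hc
      subst this; simp
    · have : n ≠ m := by rintro rfl; exact hc rfl
      have hb : ((f m).2 == (f n).2) = false := beq_false_of_ne hc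
      rw [hb]; exact ih (by omega)

theorem rootIter_succ' (f : ℕ → ℕ × ℕ) (j k : ℕ) :
    rootIter f j (k+1) = rootIter f (par f j) k := by
  induction k with
  | zero => rfl
  | succ k ih =>
    show par f (rootIter f j (k+1)) = par f (rootIter f (par f j) k)
    rw [ih]

theorem rootIter_stab {f : ℕ → ℕ × ℕ} (hp : ∀ j, par f j ≤ j) (k : ℕ) :
    ∀ i ≤ k, rootIter f i (k+1) = rootIter f i k := by
  induction k with
  | zero =>
    intro i hi
    have : i = 0 := by omega
    subst this
    exact Nat.le_zero.mp (hp 0)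
  | succ k ih =>
    intro i hi
    rw [rootIter_succ']
    by_cases h : par f i = i
    · rw [h]
    · have := hp i
      rw [ih _ (by omega), ← rootIter_succ']

theorem rootIter_ge {f : ℕ → ℕ × ℕ} (hp : ∀ j, par f j ≤ j) (i k : ℕ) (h : i ≤ k) :
    rootIter f i k = rootIter f i i := by
  induction k, h using Nat.le_induction with
  | base => rfl
  | succ k hk ih => rw [rootIter_stab hp k i hk, ih]

theorem forest_main (f : ℕ → ℕ × ℕ) (hf : Computable f) (hm : StrictMono fun n => (f n).2)
    (hlt : ∀ n, (f n).1 < (f n).2) (hn : ∀ n, n < (f n).2)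
    (hinf : ∀ i, {n | (f n).1 = i}.Infinite) (H : Set (ℕ × ℕ))
    (hH : H = {e | ∃ n, f n = e}) :
    DecidableRelSet (tc (H ∪ relInv H)) ∧ IsEquivRel (tc (H ∪ relInv H)) ∧
      IC (tc (H ∪ relInv H)) := by
  have hpe : ∀ n, par f (f n).2 = (f n).1 := fun n => parStep_eq hm n _ (hn n)
  have hpo : ∀ j, par f j = j ∨ ∃ n, f n = (par f j, j) := fun j => parStep_or f j j
  have hp : ∀ j, par f j ≤ j := by
    intro j
    rcases hpo j with h | ⟨n, h⟩
    · exact h.le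
    · have := hlt n
      rw [h] at this
      exact this.le
  have hmem : ∀ n, ((f n).1, (f n).2) ∈ H := fun n => by rw [hH]; exact ⟨n, rfl⟩
  have symm : ∀ ⦃i j⦄, (i, j) ∈ tc (H ∪ relInv H) → (j, i) ∈ tc (H ∪ relInv H) := by
    intro i j h
    change Relation.TransGen _ i j at h
    show Relation.TransGen _ j i
    have sw : ∀ a b, (a, b) ∈ H ∪ relInv H → (b, a) ∈ H ∪ relInv H := by
      intro a b hab
      rcases hab with h | h
      · exact Or.inr h
      · exact Or.inl h
    induction h with
    | single h => exact Relation.TransGen.single (sw _ _ h)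
    | tail _ h ih => exact Relation.TransGen.head (sw _ _ h) ih
  have trans : ∀ ⦃i j k⦄, (i, j) ∈ tc (H ∪ relInv H) → (j, k) ∈ tc (H ∪ relInv H) →
      (i, k) ∈ tc (H ∪ relInv H) := by
    intro i j k h1 h2
    exact Relation.TransGen.trans h1 h2
  have edge : ∀ n, ((f n).1, (f n).2) ∈ tc (H ∪ relInv H) := fun n =>
    Relation.TransGen.single (Or.inl (hmem n))
  have refl : ∀ i, (i, i) ∈ tc (H ∪ relInv H) := by
    intro i
    obtain ⟨n, rfl⟩ := (hinf i).nonempty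
    exact trans (edge n) (symm (edge n))
  have hrE : ∀ n, rootIter f (f n).1 (f n).1 = rootIter f (f n).2 (f n).2 := by
    intro n
    obtain ⟨k, hk⟩ : ∃ k, (f n).2 = k + 1 := ⟨(f n).2 - 1, by have := hn n; omega⟩
    have h1 : rootIter f (f n).2 (f n).2 = rootIter f (f n).2 (k+1) := by rw [← hk]
    rw [h1, rootIter_succ', hpe, rootIter_ge hp (f n).1 k (by have := hlt n; omega)]
  have fwd : ∀ i j, (i, j) ∈ tc (H ∪ relInv H) → rootIter f i i = rootIter f j j := by
    intro i j h
    have step : ∀ a b, (a, b) ∈ H ∪ relInv H → rootIter f a a = rootIter f b b := by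
      intro a b hab
      rw [hH] at hab
      rcases hab with ⟨n, h⟩ | ⟨n, h⟩
      · have := hrE n; rw [h] at this; exact this
      · have := hrE n; rw [h] at this; exact this.symm
    change Relation.TransGen _ i j at h
    induction h with
    | single h => exact step _ _ h
    | tail _ h ih => exact ih.trans (step _ _ h)
  have toPar : ∀ i, (i, par f i) ∈ tc (H ∪ relInv H) := by
    intro i
    rcases hpo i with h | ⟨n, h⟩
    · rw [h]; exact refl i
    · have := edge n
      rw [h] at this
      exact symm this
  have toRoot : ∀ i k, (i, rootIter f i k) ∈ tc (H ∪ relInv H) := by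
    intro i k
    induction k with
    | zero => exact refl i
    | succ k ih => exact trans ih (toPar _)
  refine ⟨?_, ⟨refl, symm, trans⟩, ?_⟩
  · have hc : Computable fun p : ℕ × ℕ => rootIter f p.1 p.1 == rootIter f p.2 p.2 :=
      (Primrec.beq (α := ℕ)).to_comp.comp ((root_computable hf).comp Computable.fst)
        ((root_computable hf).comp Computable.snd)
    refine ComputablePred.computable_iff.mpr ⟨_, hc, ?_⟩
    funext p
    obtain ⟨i, j⟩ := p
    simp only [beq_iff_eq, eq_iff_iff]
    constructor
    · exact fwd i j
    · intro h
      have := toRoot i i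
      rw [h] at this
      exact trans this (symm (toRoot j j))
  · intro i
    refine ((hinf i).image (f := fun n => (f n).2) hm.injective.injOn).mono ?_
    rintro _ ⟨n, rfl, rfl⟩
    exact edge n

theorem stmt_15 (E : Set (ℕ × ℕ)) (ν : ℕ → ℕ × ℕ) (ξ : ℕ → ℕ)
    (hE : IsEquivRel E) (hIC : IC E) (hν : IsEnumeration ν E)
    (hξ : IsCoding ν ξ) :
    DecidableRelSet (tc (Rcod ν ξ ∪ relInv (Rcod ν ξ))) ∧
    IsEquivRel (tc (Rcod ν ξ ∪ relInv (Rcod ν ξ))) ∧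
    IC (tc (Rcod ν ξ ∪ relInv (Rcod ν ξ))) := by
  obtain ⟨hνc, hEν⟩ := hν
  obtain ⟨hξc, h1, h2, h3, h4⟩ := hξ
  have hfst : ∀ n, (ν (ξ (n+1))).1 = (ν (n+1)).1 := by
    intro n
    cases n with
    | zero => exact h2
    | succ n => exact (h4 (n+1) (by omega)).2.1
  have hm : StrictMono fun n => (ν (ξ (n+1))).2 :=
    strictMono_nat_of_lt_succ fun n => (le_max_right _ _).trans_lt (h4 (n+1) (by omega)).2.2
  refine forest_main (fun n => ν (ξ (n+1))) ((hνc.comp hξc).comp Computable.succ) hm ?_ ?_ ?_ _ ?_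
  · intro n
    cases n with
    | zero => exact h2.trans_lt ((le_max_right _ _).trans_lt h3)
    | succ n => exact (le_max_left _ _).trans_lt (h4 (n+1) (by omega)).2.2
  · intro n
    induction n with
    | zero => exact Nat.zero_lt_one.trans ((le_max_left _ _).trans_lt h3)
    | succ n ih =>
      have : (ν (ξ (n+1))).2 < (ν (ξ (n+1+1))).2 := hm (Nat.lt_succ_self n)
      change n + 1 < (ν (ξ (n+1+1))).2
      change n < (ν (ξ (n+1))).2 at ih
      omega
  · intro i hfin
    refine hIC i ((hfin.image (fun n => (ν (n+1)).2)).subset ?_)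
    intro j hj
    change (i, j) ∈ E at hj
    rw [hEν] at hj
    obtain ⟨n, hn, he⟩ := hj
    obtain ⟨m, rfl⟩ : ∃ m, n = m + 1 := ⟨n - 1, by omega⟩
    refine ⟨m, ?_, ?_⟩
    · show (ν (ξ (m+1))).1 = i
      rw [hfst, he]
    · show (ν (m+1)).2 = j
      rw [he]
  · ext e
    constructor
    · rintro ⟨n, hn, he⟩
      exact ⟨n - 1, by simpa [Nat.sub_add_cancel hn] using he⟩
    · rintro ⟨n, he⟩
      exact ⟨n + 1, by omega, he⟩
end

section
/- If E is a semi-decidable equivalence relation on ℕ in which every equivalence class is infinite, then there exist an enumeration ν of E with every preimage ν⁻¹(e) infinite for e ∈ E, and codings ξ and ζ of ν such that for all n ∈ ℕ₊, ξ(n) < ζ(n) < ξ(n+1). -/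
theorem aux_find (p : ℕ × ℕ → ℕ → Bool) (hp : Computable₂ p) (h : ∀ a, ∃ m, p a m = true) :
    ∃ f : ℕ × ℕ → ℕ, Computable f ∧ ∀ a, p a (f a) = true := by
  have hd : ∀ a, (Nat.rfind (fun m => Part.some (p a m))).Dom := by
    intro a
    obtain ⟨m, hm⟩ := h a
    refine Nat.rfind_dom.2 ⟨m, ?_, fun _ => trivial⟩
    exact Part.mem_some_iff.2 hm.symm
  refine ⟨fun a => (Nat.rfind (fun m => Part.some (p a m))).get (hd a), ?_, ?_⟩
  · have : Partrec fun a => Nat.rfind (fun m => Part.some (p a m)) :=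
      Partrec.rfind (p := fun a m => Part.some (p a m)) hp.partrec₂
    refine this.of_eq fun a => ?_
    simp
  · intro a
    have := Nat.rfind_spec (Part.get_mem (hd a))
    exact (Part.mem_some_iff.1 this).symm

theorem stmt_17 (E : Set (ℕ × ℕ)) (hE : IsEquivRel E)
    (hsd : SemiDecidableRel E) (hIC : IC E) :
    ∃ (ν : ℕ → ℕ × ℕ) (ξ ζ : ℕ → ℕ), IsEnumeration ν E ∧
      (∀ e ∈ E, {n | 1 ≤ n ∧ ν n = e}.Infinite) ∧
      IsCoding ν ξ ∧ IsCoding ν ζ ∧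
      ∀ n, 1 ≤ n → ξ n < ζ n ∧ ζ n < ξ (n + 1) := by
  obtain ⟨μ, hμ, hR⟩ := hsd
  obtain ⟨ν, hν⟩ : ∃ ν : ℕ → ℕ × ℕ, ν = fun n => μ (n.unpair.1 + 1) := ⟨_, rfl⟩
  have hνc : Computable ν := by
    rw [hν]
    exact hμ.comp (Computable.succ.comp (Computable.fst.comp Computable.unpair))
  have hνE : ∀ n, ν n ∈ E := by
    intro n
    rw [hR, hν]
    exact ⟨_, Nat.succ_pos _, rfl⟩
  have hinf : ∀ e ∈ E, ∀ N, ∃ n, N < n ∧ ν n = e := by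
    intro e he N
    rw [hR] at he
    obtain ⟨k, hk, hke⟩ := he
    refine ⟨Nat.pair (k - 1) (N + 1), lt_of_lt_of_le (Nat.lt_succ_self N) (Nat.right_le_pair _ _), ?_⟩
    rw [hν]
    simp [Nat.sub_add_cancel hk, hke]
  have hfind := aux_find (fun a m => decide (a.2 < m ∧ (ν m).1 = (ν (a.1 / 2 + 1)).1 ∧
      1 < (ν m).2 ∧ (ν m).1 < (ν m).2 ∧ (ν a.2).2 < (ν m).2)) ?_ ?_
  · obtain ⟨f, hf, hs⟩ := hfind
    simp only [decide_eq_true_eq] at hs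
    obtain ⟨c, hc⟩ : ∃ c : ℕ → ℕ, c = fun k => Nat.rec (f (0, 1)) (fun k r => f (k + 1, r)) k :=
      ⟨_, rfl⟩
    have hcc : Computable c := by
      rw [hc]
      exact Computable.nat_rec Computable.id (Computable.const _)
        (hf.comp (Computable.pair (Computable.succ.comp (Computable.fst.comp Computable.snd))
          (Computable.snd.comp Computable.snd))).to₂
    have h0 : c 0 = f (0, 1) := by subst hc; rfl
    have h1 : ∀ k, c (k + 1) = f (k + 1, c k) := by intro k; subst hc; rfl
    have s0 := hs (0, 1)
    rw [← h0] at s0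
    have s1 : ∀ k, _ := fun k => hs (k + 1, c k)
    simp only [← h1] at s1
    simp only [Nat.zero_div, zero_add] at s0
    have hd : Computable fun n : ℕ => 2 * (n - 1) :=
      (Primrec.nat_mul.comp (Primrec.const 2) Primrec.pred).to_comp
    refine ⟨ν, fun n => c (2 * (n - 1)), fun n => c (2 * (n - 1) + 1), ⟨hνc, ?_⟩, ?_,
      ⟨hcc.comp hd, ?_⟩, ⟨hcc.comp (Computable.succ.comp hd), ?_⟩, ?_⟩
    · ext e
      constructor
      · intro he
        obtain ⟨n, hn, h⟩ := hinf e he 0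
        exact ⟨n, hn, h⟩
      · rintro ⟨n, _, rfl⟩
        exact hνE n
    · intro e he
      rw [Set.infinite_iff_exists_gt]
      intro N
      obtain ⟨n, hn, h⟩ := hinf e he N
      exact ⟨n, ⟨by omega, h⟩, hn⟩
    · simp only [Nat.sub_self, mul_zero, max_lt_iff]
      refine ⟨s0.1, s0.2.1, ⟨s0.2.2.1, s0.2.1 ▸ s0.2.2.2.1⟩, ?_⟩
      intro n hn
      obtain ⟨m, rfl⟩ : ∃ m, n = m + 1 := ⟨n - 1, by omega⟩
      have a := s1 (2 * m)
      have b := s1 (2 * m + 1)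
      rw [show (2 * m + 1 + 1) / 2 = m + 1 by omega] at b
      simp only [Nat.add_sub_cancel, mul_add, mul_one]
      exact ⟨a.1.trans b.1, b.2.1, b.2.2.2.1, a.2.2.2.2.trans b.2.2.2.2⟩
    · simp only [Nat.sub_self, mul_zero, max_lt_iff]
      have z := s1 0
      simp only [zero_add, show 1 / 2 = 0 by rfl] at z
      simp only [zero_add]
      refine ⟨s0.1.trans z.1, z.2.1, ⟨z.2.2.1, z.2.1 ▸ z.2.2.2.1⟩, ?_⟩
      intro n hn
      obtain ⟨m, rfl⟩ : ∃ m, n = m + 1 := ⟨n - 1, by omega⟩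
      have a := s1 (2 * m + 1)
      have b := s1 (2 * m + 1 + 1)
      rw [show (2 * m + 1 + 1 + 1) / 2 = m + 1 by omega] at b
      simp only [Nat.add_sub_cancel, mul_add, mul_one]
      exact ⟨a.1.trans b.1, b.2.1, b.2.2.2.1, a.2.2.2.2.trans b.2.2.2.2⟩
    · intro n hn
      obtain ⟨m, rfl⟩ : ∃ m, n = m + 1 := ⟨n - 1, by omega⟩
      simp only [Nat.add_sub_cancel, mul_add, mul_one]
      exact ⟨(s1 _).1, (s1 _).1⟩
  · -- computability: primitive recursive test composed with computable data
    have hP : PrimrecPred fun q : (ℕ × ℕ) × ((ℕ × ℕ) × (ℕ × ℕ)) =>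
        q.1.1 < q.1.2 ∧ q.2.1.1 = q.2.2.1 ∧ 1 < q.2.1.2 ∧ q.2.1.1 < q.2.1.2 ∧
          q.2.2.2 < q.2.1.2 := by
      have A : Primrec fun q : (ℕ × ℕ) × ((ℕ × ℕ) × (ℕ × ℕ)) => q.2.1.1 :=
        Primrec.fst.comp (Primrec.fst.comp Primrec.snd)
      have B : Primrec fun q : (ℕ × ℕ) × ((ℕ × ℕ) × (ℕ × ℕ)) => q.2.1.2 :=
        Primrec.snd.comp (Primrec.fst.comp Primrec.snd)
      have C : Primrec fun q : (ℕ × ℕ) × ((ℕ × ℕ) × (ℕ × ℕ)) => q.2.2.1 :=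
        Primrec.fst.comp (Primrec.snd.comp Primrec.snd)
      have D : Primrec fun q : (ℕ × ℕ) × ((ℕ × ℕ) × (ℕ × ℕ)) => q.2.2.2 :=
        Primrec.snd.comp (Primrec.snd.comp Primrec.snd)
      exact (Primrec.nat_lt.comp (Primrec.fst.comp Primrec.fst)
        (Primrec.snd.comp Primrec.fst)).and <| (Primrec.eq.comp A C).and <|
        (Primrec.nat_lt.comp (Primrec.const 1) B).and <| (Primrec.nat_lt.comp A B).and <|
        (Primrec.nat_lt.comp D B)
    have i1 : Computable fun x : (ℕ × ℕ) × ℕ => x.1.2 := Computable.snd.comp Computable.fst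
    have i2 : Computable fun x : (ℕ × ℕ) × ℕ => x.1.1 / 2 + 1 :=
      (Primrec.succ.comp (Primrec.nat_div.comp (Primrec.fst.comp Primrec.fst)
        (Primrec.const 2))).to_comp
    have := hP.decide.to_comp.comp (Computable.pair (Computable.pair i1 Computable.snd)
      (Computable.pair (hνc.comp Computable.snd) (Computable.pair
        (Computable.fst.comp (hνc.comp i2)) (Computable.snd.comp (hνc.comp i1)))))
    exact this
  · intro a
    obtain ⟨j, hj, hlt⟩ := (Set.infinite_iff_exists_gt.1 (hIC (ν (a.1 / 2 + 1)).1))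
      (1 + (ν (a.1 / 2 + 1)).1 + (ν a.2).2)
    obtain ⟨m, hm, e⟩ := hinf _ hj a.2
    refine ⟨m, ?_⟩
    simp only [decide_eq_true_eq, e]
    refine ⟨hm, trivial, ?_, ?_, ?_⟩ <;> omega
end

section
/- If ξ is a coding of ν, an enumeration of an equivalence relation E on ℕ with every equivalence class infinite, and for every e ∈ E the preimage ν⁻¹(e) is infinite, then S_ξ ∪ T_ξ is a symmetric, transitive relation such that [i]_{S_ξ ∪ T_ξ} is infinite for every i in the field of S_ξ ∪ T_ξ. -/
theorem stmt_18 (E : Set (ℕ × ℕ)) (ν : ℕ → ℕ × ℕ) (ξ : ℕ → ℕ)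
    (hE : IsEquivRel E) (hIC : IC E) (hν : IsEnumeration ν E)
    (hpre : ∀ e ∈ E, {n | 1 ≤ n ∧ ν n = e}.Infinite)
    (hξ : IsCoding ν ξ) :
    IsSymRel (Scod ν ξ ∪ Tcod ν ξ) ∧ IsTransRel (Scod ν ξ ∪ Tcod ν ξ) ∧
    ∀ i ∈ fld (Scod ν ξ ∪ Tcod ν ξ),
      {j | (i, j) ∈ Scod ν ξ ∪ Tcod ν ξ}.Infinite := by
  obtain ⟨-, -, -, -, h⟩ := hξ
  have mono : ∀ k n, 1 ≤ n → (ν (ξ n)).2 < (ν (ξ (n + k + 1))).2 := by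
    intro k
    induction k with
    | zero => intro n hn; exact lt_of_le_of_lt (le_max_right _ _) (h n hn).2.2
    | succ k ih =>
      intro n hn
      exact (ih n hn).trans
        (lt_of_le_of_lt (le_max_right _ _) (h (n + k + 1) (by omega)).2.2)
  have inj : ∀ m n, 1 ≤ m → 1 ≤ n → (ν (ξ m)).2 = (ν (ξ n)).2 → m = n := by
    intro m n hm hn he
    rcases lt_trichotomy m n with hl | hl | hl
    · obtain ⟨k, rfl⟩ := Nat.exists_eq_add_of_lt hl
      have := mono k m hm
      omega
    · exact hl
    · obtain ⟨k, rfl⟩ := Nat.exists_eq_add_of_lt hl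
      have := mono k n hn
      omega
  have sym : IsSymRel (Scod ν ξ ∪ Tcod ν ξ) := by
    rintro i j (⟨m, hm, n, hn, e, he⟩ | ⟨m, hm, n, hn, e, he⟩)
    · rw [Prod.mk.injEq] at he
      exact Or.inl ⟨n, hn, m, hm, by rw [e], by rw [he.1, he.2]⟩
    · rw [Prod.mk.injEq] at he
      exact Or.inr ⟨n, hn, m, hm, e.symm, by rw [he.1, he.2]⟩
  refine ⟨sym, ?_, ?_⟩
  · rintro i j k (⟨m, hm, n, hn, e, he⟩ | ⟨m, hm, n, hn, e, he⟩)
      (⟨m', hm', n', hn', e', he'⟩ | ⟨m', hm', n', hn', e', he'⟩) <;>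
    rw [Prod.mk.injEq] at he he' <;>
    obtain rfl := inj n m' hn hm' (he.2.symm.trans he'.1) <;>
    rw [e] at e'
    · exact Or.inr ⟨m, hm, n', hn', e', by rw [he.1, he'.2]⟩
    · exact Or.inl ⟨m, hm, n', hn', e', by rw [he.1, he'.2]⟩
    · exact Or.inl ⟨m, hm, n', hn', e', by rw [he.1, he'.2]⟩
    · exact Or.inr ⟨m, hm, n', hn', e', by rw [he.1, he'.2]⟩
  · intro i hi
    have key : ∃ m, 1 ≤ m ∧ i = (ν (ξ m)).2 := by
      obtain ⟨j, hj⟩ := hi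
      have hj' : (i, j) ∈ Scod ν ξ ∪ Tcod ν ξ := hj.elim id (fun h => sym h)
      rcases hj' with ⟨m, hm, n, hn, e, he⟩ | ⟨m, hm, n, hn, e, he⟩ <;>
      exact ⟨m, hm, (Prod.mk.injEq .. ▸ he).1⟩
    obtain ⟨m, hm, rfl⟩ := key
    have hmem : ν m ∈ E := by rw [hν.2]; exact ⟨m, hm, rfl⟩
    have hinf := (hpre _ hmem).image (f := fun n => (ν (ξ n)).2)
      (fun a ha b hb hab => inj a b ha.1 hb.1 hab)
    refine hinf.mono ?_
    rintro _ ⟨n, ⟨hn, hn'⟩, rfl⟩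
    exact Or.inr ⟨m, hm, n, hn, hn', rfl⟩
end
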